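/- arXiv:1905.10772 — 5 statements merged into one kernel-verified Lean document; each statement's English description precedes it below -/
import Mathlib

section
/- Suppose q ≥ 223. Then for every nonzero b ∈ K there exist nonzero u, v ∈ K that are linearly independent over F (i.e. v/u ∉ F) such that u^{q^2} v − u v^{q^2} ≠ 0 and b·(u^{q^2} v − u v^{q^2}) = u v^q − u^q v. -/
/-!
Let `φ` be the `q`-power Frobenius of an algebraic closure `L` of `K`, so that `K` is the fixed
field of `φ^[5]`. We look for a basis `u, v` of the solutions of `φ² y = A φ y - β y` with
`A = -1 / b`: for two solutions the required equation holds automatically, and `u, v` are linearly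
independent over `F` exactly when their Casoratian `u φ v - φ u v` is nonzero. It remains to choose
`β` so that all solutions are fixed by `φ^[5]`.

Writing `y = c s` with `φ² c = A φ c` normalises the equation to `φ² s = φ s - (1 + x) s`. If `x`
follows the Lyness recurrence `φ² x * x = 1 + φ x`, the fivefold iterate of this equation is
`φ⁵ s = t s`, where `t = (1 + x) (1 + φ x) (1 + x + φ x) / (x φ x)` is the Lyness invariant, while
`φ⁵ c = N(A) c`. So we need a Lyness orbit with invariant `t = 1 / N(A)`, an element of `F`.
The equation `(1 + x) (1 + φ x) (1 + x + φ x) = t x φ x` has degree `2 q + 1` in `x`. Were none of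
its roots on a Lyness orbit, they would be simple and fixed by `φ²`, with at most two for each of
the `q` possible values of `x + φ x ∈ F`, hence at most `2 q` in number.
-/

open Polynomial

section Iterate

lemma iterate_eq_pow_of_eq_pow {M : Type*} [Monoid M] {φ : M → M} {q : ℕ}
    (hφ : ∀ x, φ x = x ^ q) (k : ℕ) (x : M) : φ^[k] x = x ^ q ^ k := by
  rw [show φ = (· ^ q) from funext hφ, pow_iterate]

variable {M G : Type*} [CommMonoid M] [FunLike G M M] [MonoidHomClass G M M] (φ : G)

lemma iterate_eq_prod_mul_of_map_eq_mul {e c : M} (hc : φ c = e * c) (k : ℕ) :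
    φ^[k] c = (∏ i ∈ Finset.range k, φ^[i] e) * c := by
  induction k with
  | zero => simp
  | succ k ih =>
    rw [Function.iterate_succ_apply, hc, iterate_map_mul, ih, Finset.prod_range_succ,
      mul_left_comm, ← mul_assoc]

lemma map_prod_iterate_of_iterate_eq {e : M} {k : ℕ} (he : φ^[k] e = e) :
    φ (∏ i ∈ Finset.range k, φ^[i] e) = ∏ i ∈ Finset.range k, φ^[i] e := by
  simp only [map_prod, ← Function.iterate_succ_apply' φ]
  cases k with
  | zero => simp
  | succ k => rw [Finset.prod_range_succ, he, Finset.prod_range_succ', Function.iterate_zero_apply]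

end Iterate

section LynessCurve

variable {R : Type*} [CommRing R]

/-- `OnLynessCurve t x y` says that the Lyness invariant `(1 + x) (1 + y) (1 + x + y) / (x y)`,
which is preserved by the Lyness map `(x, y) ↦ (y, (1 + y) / x)`, has the value `t` at `(x, y)`.
The denominator is cleared, so points with `x * y = 0` are not excluded. -/
def OnLynessCurve (t x y : R) : Prop :=
  (1 + x) * (1 + y) * (1 + x + y) = t * x * y

variable [IsDomain R] {t x y : R}

lemma OnLynessCurve.one_add_ne_zero (h : OnLynessCurve t x y) (ht : t ≠ 0) (hx : x ≠ 0) :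
    1 + y ≠ 0 := by
  intro hy
  have hy0 : y = 0 := by simpa [OnLynessCurve, hy, ht, hx] using h
  simp [hy0] at hy

lemma OnLynessCurve.eq_or_mul_eq_one_add {z : R} (hxy : OnLynessCurve t x y)
    (hyz : OnLynessCurve t y z) (hy : 1 + y ≠ 0) : z = x ∨ z * x = 1 + y := by
  have hfactor : (1 + y) * ((z - x) * (z * x - (1 + y))) = 0 := by
    unfold OnLynessCurve at hxy hyz
    linear_combination x * hyz - z * hxy
  simpa [hy, sub_eq_zero] using hfactor

lemma OnLynessCurve.eq_or_eq_of_add_eq_add {x' y' : R} (h : OnLynessCurve t x y)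
    (h' : OnLynessCurve t x' y') (ht : t ≠ 0) (hadd : x' + y' = x + y) : x' = x ∨ x' = y := by
  unfold OnLynessCurve at h h'
  have hsum : t - 1 - (x + y) ≠ 0 := by
    intro hs
    have : 1 + (x + y) = 0 := by
      rw [← sq_eq_zero_iff]
      linear_combination h + x * y * hs
    exact ht (by linear_combination hs + this)
  have hmul : x * y = x' * y' := by
    apply mul_left_cancel₀ hsum
    obtain rfl : y' = x + y - x' := by linear_combination hadd
    linear_combination h' - h
  have hfactor : (x' - x) * (x' - y) = 0 := by
    linear_combination x' * hadd + hmul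
  simpa [sub_eq_zero] using hfactor

end LynessCurve

section LynessOrbit

variable {R : Type*} [CommRing R] {φ : R →+* R} {t x : R}

/-- `IsLynessOrbit φ x` says that the iterates of `φ` at `x` form an orbit of Lyness' recurrence
`x_{n+2} = (1 + x_{n+1}) / x_n`; since `φ` is a ring homomorphism, the case `n = 0` suffices. -/
def IsLynessOrbit (φ : R →+* R) (x : R) : Prop :=
  φ (φ x) * x = 1 + φ x

lemma IsLynessOrbit.map (h : IsLynessOrbit φ x) : IsLynessOrbit φ (φ x) := by
  simpa [IsLynessOrbit] using congrArg φ h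

lemma IsLynessOrbit.ne_zero [Nontrivial R] (h : IsLynessOrbit φ x) : x ≠ 0 := by
  rintro rfl
  simp [IsLynessOrbit] at h

lemma IsLynessOrbit.eq_one_add_mul [IsDomain R] (h : IsLynessOrbit φ x)
    (hcurve : OnLynessCurve t x (φ x)) :
    t = (1 + x) * (1 + φ (φ x) + φ (φ (φ x))) := by
  apply mul_left_cancel₀ (mul_ne_zero h.ne_zero h.map.ne_zero)
  have h' := h.map
  unfold OnLynessCurve at hcurve
  unfold IsLynessOrbit at h h'
  linear_combination -hcurve - (1 + x) * (φ x + 1) * h - (1 + x) * x * h'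

lemma IsLynessOrbit.iterate_five_eq_mul [IsDomain R] {s : R} (h : IsLynessOrbit φ x)
    (hcurve : OnLynessCurve t x (φ x)) (hs : φ (φ s) = φ s - (1 + x) * s) :
    φ^[5] s = t * s := by
  have hs₃ : φ (φ (φ s)) = φ (φ s) - (1 + φ x) * φ s := by simpa using congrArg φ hs
  have hs₄ : φ (φ (φ (φ s))) = φ (φ (φ s)) - (1 + φ (φ x)) * φ (φ s) := by
    simpa using congrArg φ hs₃
  have hs₅ : φ (φ (φ (φ (φ s)))) = φ (φ (φ (φ s))) - (1 + φ (φ (φ x))) * φ (φ (φ s)) := by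
    simpa using congrArg φ hs₄
  have hmap : φ (φ (φ x)) * φ x = 1 + φ (φ x) := h.map
  have hs₃' : φ (φ (φ s)) = -φ x * φ s - (1 + x) * s := by
    linear_combination hs₃ + hs
  have hs₄' : φ (φ (φ (φ s))) =
      -φ x * (1 + φ (φ (φ x))) * φ s + (1 + x) * φ (φ x) * s := by
    linear_combination hs₄ + hs₃' - (1 + φ (φ x)) * hs + φ s * hmap
  calc φ (φ (φ (φ (φ s)))) = (1 + x) * (1 + φ (φ x) + φ (φ (φ x))) * s := by
        linear_combination hs₅ + hs₄' - (1 + φ (φ (φ x))) * hs₃'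
    _ = t * s := by rw [h.eq_one_add_mul hcurve]

end LynessOrbit

section FrobeniusPower

variable {L : Type*} [Field L] [IsAlgClosed L] {φ : L →+* L} {q : ℕ}

lemma exists_ne_zero_map_eq_mul (hφ : ∀ x, φ x = x ^ q) (hq : 1 < q) {d : L} (hd : d ≠ 0) :
    ∃ c, c ≠ 0 ∧ φ c = d * c := by
  obtain ⟨c, hc⟩ := IsAlgClosed.exists_pow_nat_eq d (Nat.sub_pos_of_lt hq)
  refine ⟨c, ?_, ?_⟩
  · rintro rfl
    exact hd (by rw [← hc, zero_pow (Nat.sub_pos_of_lt hq).ne'])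
  · rw [hφ, ← hc, pow_sub_one_mul (by lia)]

lemma exists_mul_map_sub_map_mul_eq (hφ : ∀ x, φ x = x ^ q) (hq : 1 < q) {s : L} (hs : s ≠ 0)
    (w : L) : ∃ r, s * φ r - φ s * r = w := by
  have hdeg : (C s * X ^ q - C (φ s) * X).natDegree = q := by
    rw [natDegree_sub_eq_left_of_natDegree_lt] <;> rw [natDegree_C_mul_X_pow _ _ hs]
    exact ((natDegree_C_mul_le _ _).trans natDegree_X_le).trans_lt hq
  obtain ⟨r, hr⟩ := IsAlgClosed.eval_surjective (hdeg.trans_ne (by lia)) w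
  exact ⟨r, by simpa [hφ r] using hr⟩

/-- A first solution `s` comes from a factorisation of the difference operator. The Casoratian
`w = s φ r - φ s r` of two solutions satisfies `φ w = β w`; conversely, any nonzero such `w` gives a
second solution `r`. -/
lemma exists_solutions_casoratian_ne_zero (hφ : ∀ x, φ x = x ^ q) (hq : 1 < q) (α : L) {β : L}
    (hβ : β ≠ 0) :
    ∃ s r, φ (φ s) = α * φ s - β * s ∧ φ (φ r) = α * φ r - β * r ∧ s * φ r - φ s * r ≠ 0 := by
  obtain ⟨d, hd⟩ : ∃ d, φ d * d = α * d - β := by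
    have hdeg : (X ^ (q + 1) - C α * X).natDegree = q + 1 := by
      rw [natDegree_sub_eq_left_of_natDegree_lt] <;> rw [natDegree_X_pow]
      exact ((natDegree_C_mul_le _ _).trans natDegree_X_le).trans_lt (by lia)
    obtain ⟨d, hd⟩ := IsAlgClosed.eval_surjective (hdeg.trans_ne (by lia)) (-β)
    simp only [eval_sub, eval_pow, eval_mul, eval_X, eval_C] at hd
    exact ⟨d, by rw [hφ]; linear_combination hd⟩
  have hd₀ : d ≠ 0 := by
    rintro rfl
    simp [hβ] at hd
  obtain ⟨s, hs₀, hs⟩ := exists_ne_zero_map_eq_mul hφ hq hd₀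
  obtain ⟨w, hw₀, hw⟩ := exists_ne_zero_map_eq_mul hφ hq hβ
  obtain ⟨r, hr⟩ := exists_mul_map_sub_map_mul_eq hφ hq hs₀ w
  have hss : φ (φ s) = α * φ s - β * s := by
    have h := congrArg φ hs
    rw [map_mul] at h
    linear_combination h + (φ d - α) * hs + s * hd
  have hrr : φ (φ r) = α * φ r - β * r := by
    have h := congrArg φ hr
    simp only [map_sub, map_mul] at h
    apply mul_left_cancel₀ ((map_ne_zero φ).2 hs₀)
    linear_combination h + hw - β * hr + φ r * hss
  exact ⟨s, r, hss, hrr, hr ▸ hw₀⟩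

end FrobeniusPower

section LynessPolynomial

/-- The polynomial whose roots are the `x` with `(x, x ^ q)` on the Lyness curve of level `t`. -/
noncomputable def lynessPolynomial {R : Type*} [CommRing R] (q : ℕ) (t : R) : R[X] :=
  (X + C 1) * (X ^ q + C 1) * (X ^ q + (X + C 1)) - C t * X ^ (q + 1)

lemma isRoot_lynessPolynomial {R : Type*} [CommRing R] {q : ℕ} {t x : R} :
    (lynessPolynomial q t).IsRoot x ↔ OnLynessCurve t x (x ^ q) := by
  rw [IsRoot.def, OnLynessCurve, ← sub_eq_zero (b := t * x * x ^ q)]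
  simp only [lynessPolynomial, eval_sub, eval_mul, eval_add, eval_X, eval_C, eval_pow]
  ring_nf

lemma natDegree_lynessPolynomial {R : Type*} [CommRing R] [Nontrivial R] {q : ℕ} (hq : 1 < q)
    (t : R) : (lynessPolynomial q t).natDegree = 2 * q + 1 := by
  have hX : (X + C (1 : R)).Monic := monic_X_add_C 1
  have hXq : (X ^ q + C (1 : R)).Monic := monic_X_pow_add_C 1 (by lia)
  have hlt : (X + C (1 : R)).natDegree < (X ^ q : R[X]).natDegree := by
    simpa only [natDegree_X_add_C, natDegree_X_pow] using hq
  have hsum : (X ^ q + (X + C (1 : R))).Monic :=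
    (monic_X_pow q).add_of_left (degree_lt_degree hlt)
  have hprod : ((X + C (1 : R)) * (X ^ q + C 1) * (X ^ q + (X + C 1))).natDegree = 2 * q + 1 := by
    rw [(hX.mul hXq).natDegree_mul hsum, hX.natDegree_mul hXq, natDegree_X_add_C,
      natDegree_X_pow_add_C, natDegree_add_eq_left_of_natDegree_lt hlt, natDegree_X_pow]
    ring
  rw [lynessPolynomial, natDegree_sub_eq_left_of_natDegree_lt, hprod]
  exact (natDegree_C_mul_X_pow_le _ _).trans_lt (by lia)

lemma eval_derivative_lynessPolynomial {R : Type*} [CommRing R] {q : ℕ} (hqR : (q : R) = 0)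
    (t x : R) : (derivative (lynessPolynomial q t)).eval x =
      (1 + x ^ q) * (2 + 2 * x + x ^ q) - t * x ^ q := by
  simp only [lynessPolynomial, pow_succ X q, derivative_sub, derivative_mul, derivative_add,
    derivative_C, derivative_X, derivative_X_pow, hqR, map_zero, eval_sub, eval_add, eval_mul,
    eval_pow, eval_zero, eval_one, eval_C, eval_X]
  ring

lemma separable_lynessPolynomial {L : Type*} [Field L] [IsAlgClosed L] {q : ℕ}
    (hqL : (q : L) = 0) {t : L}
    (hroot : ∀ x, (lynessPolynomial q t).IsRoot x → 1 + x ^ q ≠ 0 ∧ x * x ≠ 1 + x ^ q) :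
    (lynessPolynomial q t).Separable := by
  rw [separable_def, isCoprime_iff_aeval_ne_zero_of_isAlgClosed L L]
  by_contra! ⟨x, hx, hx'⟩
  have hfactor : (1 + x ^ q) * (x * x - (1 + x ^ q)) = 0 := by
    rw [coe_aeval_eq_eval, eval_derivative_lynessPolynomial hqL] at hx'
    have hcurve := isRoot_lynessPolynomial.1 hx
    unfold OnLynessCurve at hcurve
    linear_combination x * hx' - hcurve
  simp [sub_eq_zero, hroot x hx] at hfactor

/-- The sum `x + φ x` is one of the `q` elements fixed by `φ`, and each line `x + y = s` meets the
curve in at most two points. -/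
lemma card_le_two_mul_of_onLynessCurve {L : Type*} [Field L] {φ : L →+* L} {q : ℕ}
    (hφ : ∀ x, φ x = x ^ q) (hq : 1 < q) {t : L} (ht : t ≠ 0) {S : Finset L}
    (hcurve : ∀ x ∈ S, OnLynessCurve t x (φ x)) (hfix : ∀ x ∈ S, φ (φ x) = x) :
    S.card ≤ 2 * q := by
  classical
  let trace : L → L := fun x ↦ x + φ x
  have hfiber : ∀ s ∈ S.image trace, (S.filter (trace · = s)).card ≤ 2 := by
    simp only [Finset.forall_mem_image]
    intro x hx
    refine (Finset.card_le_card fun y hy ↦ ?_).trans (Finset.card_le_two (a := x) (b := φ x))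
    obtain ⟨hy, hyx⟩ := Finset.mem_filter.1 hy
    simpa using (hcurve x hx).eq_or_eq_of_add_eq_add (hcurve y hy) ht hyx
  have himage : (S.image trace).card ≤ q := by
    have hroots : (S.image trace).val ⊆ (X ^ q - X : L[X]).roots := by
      intro s hs
      obtain ⟨x, hx, rfl⟩ := Finset.mem_image.1 hs
      rw [mem_roots (FiniteField.X_pow_card_sub_X_ne_zero L hq), IsRoot.def, eval_sub, eval_pow,
        eval_X, ← hφ, map_add, hfix x hx, add_comm, sub_self]
    simpa [FiniteField.X_pow_card_sub_X_natDegree_eq L hq] using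
      card_le_degree_of_subset_roots hroots
  exact (Finset.card_le_mul_card_image S 2 hfiber).trans (Nat.mul_le_mul_left 2 himage)

lemma exists_isLynessOrbit_onLynessCurve {L : Type*} [Field L] [IsAlgClosed L] {φ : L →+* L}
    {q : ℕ} (hφ : ∀ x, φ x = x ^ q) (hq : 1 < q) (hqL : (q : L) = 0) {t : L} (ht : t ≠ 0)
    (hφt : φ t = t) : ∃ x, IsLynessOrbit φ x ∧ OnLynessCurve t x (φ x) := by
  classical
  by_contra! hnone
  have hcurve : ∀ x, (lynessPolynomial q t).IsRoot x → OnLynessCurve t x (φ x) := fun x hx ↦ by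
    rw [hφ]
    exact isRoot_lynessPolynomial.1 hx
  have hne : ∀ x, (lynessPolynomial q t).IsRoot x → 1 + φ x ≠ 0 := fun x hx ↦
    (hcurve x hx).one_add_ne_zero ht <| by
      rintro rfl
      simpa [OnLynessCurve] using hcurve 0 hx
  have hfix : ∀ x, (lynessPolynomial q t).IsRoot x → φ (φ x) = x := fun x hx ↦ by
    have hmap : OnLynessCurve t (φ x) (φ (φ x)) := by
      simpa [OnLynessCurve, hφt] using congrArg φ (hcurve x hx)
    exact ((hcurve x hx).eq_or_mul_eq_one_add hmap (hne x hx)).resolve_right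
      fun h ↦ hnone x h (hcurve x hx)
  have hsep : (lynessPolynomial q t).Separable := by
    refine separable_lynessPolynomial hqL fun x hx ↦ ?_
    rw [← hφ]
    refine ⟨hne x hx, fun h ↦ hnone x ?_ (hcurve x hx)⟩
    rwa [IsLynessOrbit, hfix x hx]
  have hroots : ∀ x ∈ (lynessPolynomial q t).roots.toFinset, (lynessPolynomial q t).IsRoot x :=
    fun x hx ↦ isRoot_of_mem_roots (Multiset.mem_toFinset.1 hx)
  have hcard : (lynessPolynomial q t).roots.toFinset.card = 2 * q + 1 := by
    rw [Multiset.toFinset_card_of_nodup (nodup_roots hsep), IsAlgClosed.card_roots_eq_natDegree,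
      natDegree_lynessPolynomial hq]
  have := card_le_two_mul_of_onLynessCurve hφ hq ht (fun x hx ↦ hcurve x (hroots x hx))
    fun x hx ↦ hfix x (hroots x hx)
  lia

end LynessPolynomial

section IterateFive

variable {L : Type*} [Field L] [IsAlgClosed L] {φ : L →+* L} {q : ℕ}

lemma exists_solutions_iterate_five_eq_mul (hφ : ∀ x, φ x = x ^ q) (hq : 1 < q)
    (hqL : (q : L) = 0) {t : L} (ht : t ≠ 0) (hφt : φ t = t) :
    ∃ β s r, φ (φ s) = φ s - β * s ∧ φ (φ r) = φ r - β * r ∧ s * φ r - φ s * r ≠ 0 ∧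
      φ^[5] s = t * s ∧ φ^[5] r = t * r := by
  obtain ⟨x, hx, hcurve⟩ := exists_isLynessOrbit_onLynessCurve hφ hq hqL ht hφt
  have hx₁ : 1 + x ≠ 0 := by
    rw [← map_ne_zero φ, map_add, map_one, ← hx]
    exact mul_ne_zero hx.map.map.ne_zero hx.ne_zero
  obtain ⟨s, r, hs, hr, hsr⟩ := exists_solutions_casoratian_ne_zero hφ hq 1 hx₁
  rw [one_mul] at hs hr
  exact ⟨1 + x, s, r, hs, hr, hsr, hx.iterate_five_eq_mul hcurve hs,
    hx.iterate_five_eq_mul hcurve hr⟩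

/-- The solutions are `u = c s`, `v = c r`, where `φ² c = -b⁻¹ φ c` and `s`, `r` solve the
normalised equation attached to a Lyness orbit. -/
lemma exists_iterate_five_eq_self_and_mul_eq (hφ : ∀ x, φ x = x ^ q) (hq : 1 < q)
    (hqL : (q : L) = 0) {b : L} (hb : b ≠ 0) (hφb : φ^[5] b = b) :
    ∃ u v, φ^[5] u = u ∧ φ^[5] v = v ∧ u * φ v - φ u * v ≠ 0 ∧
      b * (φ (φ u) * v - u * φ (φ v)) = u * φ v - φ u * v := by
  obtain ⟨e, he₀, hbe, he⟩ : ∃ e, e ≠ 0 ∧ b * φ e = -1 ∧ φ^[5] e = e := by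
    have hinv : φ^[5] (-b⁻¹) = -b⁻¹ := by simpa using hφb
    refine ⟨φ^[4] (-b⁻¹), by simpa using hb, ?_, ?_⟩
    · rw [← Function.iterate_succ_apply' φ, hinv, mul_neg, mul_inv_cancel₀ hb]
    · rw [(Function.Commute.refl φ).iterate_iterate 5 4, hinv]
  obtain ⟨c, hc₀, hc⟩ := exists_ne_zero_map_eq_mul hφ hq he₀
  let N := ∏ i ∈ Finset.range 5, φ^[i] e
  have hN₀ : N ≠ 0 := Finset.prod_ne_zero_iff.2 fun i _ ↦ by
    rw [iterate_eq_pow_of_eq_pow hφ]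
    exact pow_ne_zero _ he₀
  have hφN : φ N⁻¹ = N⁻¹ := by
    rw [map_inv₀, map_prod_iterate_of_iterate_eq φ he]
  have hcN : φ^[5] c = N * c := iterate_eq_prod_mul_of_map_eq_mul φ hc 5
  obtain ⟨β, s, r, hs, hr, hsr, hs₅, hr₅⟩ :=
    exists_solutions_iterate_five_eq_mul hφ hq hqL (inv_ne_zero hN₀) hφN
  have hcas : c * s * φ (c * r) - φ (c * s) * (c * r) = c * φ c * (s * φ r - φ s * r) := by
    simp only [map_mul]
    ring
  have hc₂ : b * φ (φ c) = -φ c := by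
    rw [hc, map_mul, ← hc]
    linear_combination φ c * hbe
  refine ⟨c * s, c * r, ?_, ?_, ?_, ?_⟩
  · rw [iterate_map_mul, hcN, hs₅, mul_mul_mul_comm, mul_inv_cancel₀ hN₀, one_mul]
  · rw [iterate_map_mul, hcN, hr₅, mul_mul_mul_comm, mul_inv_cancel₀ hN₀, one_mul]
  · rw [hcas]
    exact mul_ne_zero (mul_ne_zero hc₀ ((map_ne_zero φ).2 hc₀)) hsr
  · rw [hcas]
    simp only [map_mul, hs, hr]
    linear_combination c * (φ s * r - s * φ r) * hc₂

end IterateFive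

section FiniteField

lemma mem_range_algebraMap_of_pow_card_eq {K L : Type*} [Field K] [Finite K] [CommRing L]
    [IsDomain L] [Algebra K L] {x : L} (hx : x ^ Nat.card K = x) :
    x ∈ (algebraMap K L).range := by
  have := Fintype.ofFinite K
  rw [Nat.card_eq_fintype_card] at hx
  have hsplits : (X ^ Fintype.card K - X : K[X]).Splits := by
    rw [splits_iff_card_roots, FiniteField.roots_X_pow_card_sub_X,
      FiniteField.X_pow_card_sub_X_natDegree_eq K Fintype.one_lt_card]
    rfl
  exact hsplits.mem_range_of_isRoot
    (FiniteField.X_pow_card_sub_X_ne_zero K Fintype.one_lt_card) (by simp [hx])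

lemma mul_pow_card_sub_eq_zero_of_div_mem {K : Type*} [Field K] {F : Subfield K} [Finite F]
    {u v : K} (hu : u ≠ 0) (h : v / u ∈ F) :
    u * v ^ Nat.card F - u ^ Nat.card F * v = 0 := by
  have := Fintype.ofFinite F
  have hpow : (v / u) ^ Nat.card F = v / u := by
    rw [Nat.card_eq_fintype_card]
    exact congrArg Subtype.val (FiniteField.pow_card (⟨v / u, h⟩ : F))
  rw [div_pow, div_eq_div_iff (pow_ne_zero _ hu) hu] at hpow
  linear_combination hpow

lemma exists_mul_eq_of_card_eq_pow_five {K : Type*} [Field K] [Finite K] {p n : ℕ} [Fact p.Prime]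
    (hn : n ≠ 0) (hK : Nat.card K = (p ^ n) ^ 5) {b : K} (hb : b ≠ 0) :
    ∃ u v : K, u * v ^ p ^ n - u ^ p ^ n * v ≠ 0 ∧
      b * (u ^ (p ^ n) ^ 2 * v - u * v ^ (p ^ n) ^ 2) = u * v ^ p ^ n - u ^ p ^ n * v := by
  have := Fintype.ofFinite K
  have : CharP K p := charP_of_card_eq_prime_pow (f := n * 5) <| by
    rw [← Nat.card_eq_fintype_card, hK, pow_mul]
  let ι := algebraMap K (AlgebraicClosure K)
  have : CharP (AlgebraicClosure K) p := charP_of_injective_algebraMap ι.injective p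
  have hφ := iterateFrobenius_def (R := AlgebraicClosure K) p n
  have hb₅ : (ι b) ^ (p ^ n) ^ 5 = ι b := by
    rw [← map_pow, ← hK, Nat.card_eq_fintype_card, FiniteField.pow_card]
  obtain ⟨U, V, hU, hV, hUV, heq⟩ := exists_iterate_five_eq_self_and_mul_eq hφ
    (Nat.one_lt_pow hn (Fact.out : p.Prime).one_lt) (by simp [hn]) ((map_ne_zero ι).2 hb)
    ((iterate_eq_pow_of_eq_pow hφ 5 _).trans hb₅)
  rw [iterate_eq_pow_of_eq_pow hφ, ← hK] at hU hV
  obtain ⟨u, rfl⟩ := mem_range_algebraMap_of_pow_card_eq hU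
  obtain ⟨v, rfl⟩ := mem_range_algebraMap_of_pow_card_eq hV
  simp only [ι, hφ, ← map_pow, ← map_mul, ← map_sub, ← pow_mul _ (p ^ n) (p ^ n), ← sq] at hUV heq
  exact ⟨u, v, fun h ↦ hUV (by rw [h, map_zero]), ι.injective heq⟩

end FiniteField

theorem stmt_0_general (q : ℕ) (hq : ∃ p n : ℕ, Nat.Prime p ∧ 0 < n ∧ q = p ^ n)
    (K : Type*) [Field K] (F : Subfield K)
    (hFcard : Nat.card F = q) (hKcard : Nat.card K = q ^ 5) (b : K) (hb : b ≠ 0) :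
    ∃ u v : K, u ≠ 0 ∧ v ≠ 0 ∧ v / u ∉ F ∧
      u ^ q ^ 2 * v - u * v ^ q ^ 2 ≠ 0 ∧
      b * (u ^ q ^ 2 * v - u * v ^ q ^ 2) = u * v ^ q - u ^ q * v := by
  obtain ⟨p, n, hp, hn, rfl⟩ := hq
  have := Fact.mk hp
  have : Finite K := Nat.finite_of_card_ne_zero (by simp [hKcard, hp.ne_zero])
  obtain ⟨u, v, huv, heq⟩ := exists_mul_eq_of_card_eq_pow_five hn.ne' hKcard hb
  have hu : u ≠ 0 := by
    rintro rfl
    simp [hp.ne_zero] at huv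
  have hv : v ≠ 0 := by
    rintro rfl
    simp [hp.ne_zero] at huv
  refine ⟨u, v, hu, hv, fun hF ↦ huv ?_, right_ne_zero_of_mul (heq.trans_ne huv), heq⟩
  rw [← hFcard]
  exact mul_pow_card_sub_eq_zero_of_div_mem hu hF

theorem stmt_0 (q : ℕ) (hq : ∃ p n : ℕ, Nat.Prime p ∧ 0 < n ∧ q = p ^ n)
    (K : Type*) [Field K] (F : Subfield K)
    (hFcard : Nat.card F = q) (hKcard : Nat.card K = q ^ 5)
    (hq223 : 223 ≤ q) (b : K) (hb : b ≠ 0) :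
    ∃ u v : K, u ≠ 0 ∧ v ≠ 0 ∧ v / u ∉ F ∧
      u ^ q ^ 2 * v - u * v ^ q ^ 2 ≠ 0 ∧
      b * (u ^ q ^ 2 * v - u * v ^ q ^ 2) = u * v ^ q - u ^ q * v :=
  stmt_0_general q hq K F hFcard hKcard b hb
end

section
/- Suppose q ≥ 223 and let m = (q^5 − 1)/(q − 1) = 1 + q + q^2 + q^3 + q^4. Then for every a ∈ F with a ≠ 0 there exists x ∈ K with x ∉ F such that (x^{q^2} − x)^m = a·(x^q − x)^m. -/
/-!
Let `σ` be the `q`-Frobenius of an algebraic closure of `F`. Suppose that the orbit `αᵢ = σⁱ α`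
satisfies the pentagon recurrence `αᵢ αᵢ₊₁ + αᵢ₊₃ = 1` of Gauss's pentagramma mirificum and has
period 5. Then every solution of `σ² v = α σ v - v` has period 5 as well. Fix such a `v ≠ 0` and
solve `σ w - w = 1 / (v σ v)`; then `w v` is a second solution, so `w` also has period 5, that is,
`w ∈ K`. Moreover `σ² w - w = α / (v σ² v)`, so `N (σ² w - w) = N α * N (σ w - w)`.

It remains to find a pentagon cycle with `N α = a`. The product `α₀ α₁ α₂ α₃ α₄` is a first integral
of the pentagon recurrence, and its level set is the symmetric curve
`x y (1 - x) (1 - y) = a (1 - x y)`, of degree 2 in each variable. The equation for `(x, σ x)` to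
lie on it has degree `2 q + 2`. Applying `σ`, both `x` and `σ² x` are partners of `σ x` on the
curve. If they are its two different partners (or a double one), then `x` is a pentagon cycle;
otherwise all roots are simple and satisfy `σ² x = x`, and there are at most `2 q` of those.
-/

open Function Polynomial
open scoped Finset

section PentagonCycle

variable {R Φ : Type*} [CommRing R] [FunLike Φ R R] [RingHomClass Φ R R] {φ : Φ} {α v : R}

/-- The orbit `αᵢ = f^[i] α` is a cycle of Gauss's pentagramma mirificum: it has period 5 and
satisfies `αᵢ αᵢ₊₁ + αᵢ₊₃ = 1` (imposed only for `i = 0`, since the other cases follow when `f` is a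
ring homomorphism). The signs are such that `-αᵢ` is the first row of a frieze pattern. -/
structure IsPentagonCycle (f : R → R) (α : R) : Prop where
  mul_add : α * f α + f (f (f α)) = 1
  isPeriodicPt : IsPeriodicPt f 5 α

/-- The orbit `vᵢ = f^[i] v` solves the discrete Hill equation `vᵢ₊₂ = αᵢ vᵢ₊₁ - vᵢ`, with
`αᵢ = f^[i] α`. As above, only the case `i = 0` is imposed. -/
def IsHillSolution (f : R → R) (α v : R) : Prop :=
  f (f v) = α * f v - v

theorem IsPentagonCycle.map (h : IsPentagonCycle φ α) : IsPentagonCycle φ (φ α) where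
  mul_add := by simpa only [map_add, map_mul, map_one] using congrArg φ h.mul_add
  isPeriodicPt := h.isPeriodicPt.apply

theorem IsPentagonCycle.mul_add_two (h : IsPentagonCycle φ α) :
    φ (φ α) * φ (φ (φ α)) + α = 1 := by
  have h_two := h.map.map.mul_add
  rwa [show φ (φ (φ (φ (φ α)))) = α from h.isPeriodicPt] at h_two

theorem IsPentagonCycle.prod_eq {a : R} (hα : IsPentagonCycle φ α)
    (hαa : α * φ α * φ (φ α) * (1 - φ α) = a) :
    α * φ α * φ (φ α) * φ (φ (φ α)) * φ (φ (φ (φ α))) = a := by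
  linear_combination hαa + α * φ α * φ (φ α) * hα.map.mul_add_two

theorem IsHillSolution.map (h : IsHillSolution φ α v) : IsHillSolution φ (φ α) (φ v) := by
  simpa only [IsHillSolution, map_sub, map_mul] using congrArg φ h

theorem IsHillSolution.isPeriodicPt (hα : IsPentagonCycle φ α) (hv : IsHillSolution φ α v) :
    IsPeriodicPt φ 5 v := by
  change φ (φ (φ (φ (φ v)))) = v
  have h₂ : φ (φ v) = _ := hv
  have h₃ : φ (φ (φ v)) = _ := hv.map
  have h₄ : φ (φ (φ (φ v))) = _ := hv.map.map
  have h₅ : φ (φ (φ (φ (φ v)))) = _ := hv.map.map.map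
  linear_combination h₅ + φ (φ (φ α)) * h₄ + φ (φ (φ v)) * hα.mul_add_two
    - α * h₃ - φ (φ v) * hα.mul_add - h₂

end PentagonCycle

section ReductionOfOrder

variable {L Φ : Type*} [Field L] [FunLike Φ L L] [RingHomClass Φ L L] {φ : Φ} {α v w : L}

theorem IsHillSolution.map_map_sub_self (hv : IsHillSolution φ α v) (hv₀ : v ≠ 0)
    (hw : φ w - w = (v * φ v)⁻¹) : φ (φ w) - w = α * (v * φ (φ v))⁻¹ := by
  have hv₁ : φ v ≠ 0 := by simpa using hv₀
  have hv₂ : φ (φ v) ≠ 0 := by simpa using hv₁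
  have hv_add : φ (φ v) + v = α * φ v := by rw [hv, sub_add_cancel]
  calc φ (φ w) - w = (φ v * φ (φ v))⁻¹ + (v * φ v)⁻¹ := by
        rw [← hw, ← map_mul, ← map_inv₀, ← hw, map_sub]
        ring
    _ = (φ (φ v) + v) * (v * φ v * φ (φ v))⁻¹ := by
        field_simp
        ring
    _ = α * (v * φ (φ v))⁻¹ := by
        rw [hv_add]
        field_simp

theorem IsHillSolution.mul_of_sub_eq (hv : IsHillSolution φ α v) (hv₀ : v ≠ 0)
    (hw : φ w - w = (v * φ v)⁻¹) : IsHillSolution φ α (w * v) := by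
  have hv₁ : φ v ≠ 0 := by simpa using hv₀
  have hv₂ : φ (φ v) ≠ 0 := by simpa using hv₁
  have hw₁ : φ w = w + (v * φ v)⁻¹ := by rw [← hw, add_sub_cancel]
  have hw₂ : φ (φ w) = w + α * (v * φ (φ v))⁻¹ := by
    rw [← hv.map_map_sub_self hv₀ hw, add_sub_cancel]
  have hv_eq : φ (φ v) = α * φ v - v := hv
  simp only [IsHillSolution, map_mul]
  rw [hw₂, hw₁]
  field_simp
  linear_combination w * v * hv_eq

theorem IsHillSolution.isPeriodicPt_of_sub_eq (hα : IsPentagonCycle φ α)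
    (hv : IsHillSolution φ α v) (hv₀ : v ≠ 0) (hw : φ w - w = (v * φ v)⁻¹) :
    IsPeriodicPt φ 5 w := by
  have hv₅ : φ (φ (φ (φ (φ v)))) = v := hv.isPeriodicPt hα
  have hwv₅ : φ (φ (φ (φ (φ (w * v))))) = w * v := (hv.mul_of_sub_eq hv₀ hw).isPeriodicPt hα
  simp only [map_mul, hv₅] at hwv₅
  exact mul_right_cancel₀ hv₀ hwv₅

end ReductionOfOrder

section PentagonCurve

variable {R : Type*} [CommRing R]

/-- The level curve `x y (1 - x) (1 - y) / (1 - x y) = a` of the product of a pentagon cycle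
with consecutive terms `x` and `y`, with the denominator cleared. -/
def PentagonCurve (a x y : R) : Prop :=
  x * y * (1 - x) * (1 - y) = a * (1 - x * y)

namespace PentagonCurve

variable {Φ : Type*} [FunLike Φ R R] [RingHomClass Φ R R] {φ : Φ} {a x y z x' y' : R}

theorem map (h : PentagonCurve a x y) : PentagonCurve (φ a) (φ x) (φ y) := by
  simpa only [PentagonCurve, map_mul, map_sub, map_one] using congrArg φ h

theorem mul_eq_of_ne [IsDomain R] (hxy : PentagonCurve a x y) (hyz : PentagonCurve a y z)
    (hzx : z ≠ x) : x * y * z * (1 - y) = a := by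
  unfold PentagonCurve at hxy hyz
  -- For fixed `y` the curve is the quadratic `y (1 - y) x² - (y (1 - y) + a y) x + a = 0` in `x`,
  -- with roots `x` and `z`: Vieta's formula for their sum gives the one for their product.
  have h_sum : y * (1 - y) * (z + x) - (y * (1 - y) + a * y) = 0 := by
    refine (mul_eq_zero.1 ?_).resolve_left (sub_ne_zero.2 hzx)
    linear_combination hxy - hyz
  linear_combination x * h_sum + hxy

theorem mul_eq_of_deriv_eq_zero (hxy : PentagonCurve a x y)
    (h : y * (1 - y) * (1 - 2 * x) + a * y = 0) : x * y * x * (1 - y) = a := by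
  unfold PentagonCurve at hxy
  linear_combination hxy - x * h

theorem mul_ne_zero (hxy : PentagonCurve a x y) (ha : a ≠ 0) : x * y ≠ 0 := by
  intro h
  apply ha
  unfold PentagonCurve at hxy
  linear_combination (a + (1 - x) * (1 - y)) * h - hxy

theorem eq_or_eq_of_mul_eq [IsDomain R] (ha : a ≠ 0) (hxy : PentagonCurve a x y)
    (hxy' : PentagonCurve a x' y') (h : x' * y' = x * y) : x' = x ∨ x' = y := by
  have h_add : x' + y' = x + y := by
    apply mul_left_cancel₀ (hxy.mul_ne_zero ha)
    unfold PentagonCurve at hxy hxy'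
    linear_combination hxy - hxy' + (1 - x' - y' + x' * y' + x * y + a) * h
  have h_roots : (x' - x) * (x' - y) = 0 := by linear_combination x' * h_add - h
  simpa only [mul_eq_zero, sub_eq_zero] using h_roots

end PentagonCurve

variable [IsDomain R] {Φ : Type*} [FunLike Φ R R] [RingHomClass Φ R R] {φ : Φ} {a x : R}

theorem IsPentagonCycle.of_pentagonCurve (hφa : φ a = a) (ha : a ≠ 0)
    (hx : PentagonCurve a x (φ x)) (hxa : x * φ x * φ (φ x) * (1 - φ x) = a) :
    IsPentagonCycle φ x := by
  unfold PentagonCurve at hx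
  have hxa₁ : φ x * φ (φ x) * φ (φ (φ x)) * (1 - φ (φ x)) = a := by
    simpa only [map_mul, map_sub, map_one, hφa] using congrArg φ hxa
  have hne : x * φ x * φ (φ x) * (1 - φ x) ≠ 0 := hxa.symm ▸ ha
  have hx₂ : φ (φ x) * (1 - x * φ x) = 1 - x := by
    refine mul_left_cancel₀ (left_ne_zero_of_mul (b := φ (φ x)) (a := x * φ x * (1 - φ x)) ?_) ?_
    · convert hne using 1
      ring
    · linear_combination (1 - x * φ x) * hxa - hx
  have hx₃ : x * φ x + φ (φ (φ x)) = 1 := by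
    refine mul_left_cancel₀ hne ?_
    linear_combination (1 - x * φ x) * (hxa₁ - hxa) + φ x * φ (φ x) * φ (φ (φ x)) * hx₂
  have hx₅ : φ (φ x) * φ (φ (φ x)) + φ (φ (φ (φ (φ x)))) = 1 := by
    simpa only [map_add, map_mul, map_one] using congrArg (fun t ↦ φ (φ t)) hx₃
  refine ⟨hx₃, show φ (φ (φ (φ (φ x)))) = x from ?_⟩
  linear_combination hx₅ - φ (φ x) * hx₃ - hx₂

end PentagonCurve

section FiniteField

theorem pow_pow_geom_of_pow_eq_self {M : Type*} [Monoid M] {x : M} {q : ℕ} (hx : x ^ q ^ 5 = x) :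
    (x ^ q) ^ (1 + q + q ^ 2 + q ^ 3 + q ^ 4) = x ^ (1 + q + q ^ 2 + q ^ 3 + q ^ 4) :=
  calc (x ^ q) ^ (1 + q + q ^ 2 + q ^ 3 + q ^ 4)
      = x ^ (q + q ^ 2 + q ^ 3 + q ^ 4) * x ^ q ^ 5 := by
        rw [← pow_mul, ← pow_add]
        ring_nf
    _ = x ^ (1 + q + q ^ 2 + q ^ 3 + q ^ 4) := by
        rw [hx, ← pow_succ]
        ring_nf

theorem mem_range_algebraMap_of_pow_card_eq_self {K L : Type*} [Field K] [Finite K] [Field L]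
    [Algebra K L] {x : L} (hx : x ^ Nat.card K = x) : x ∈ (algebraMap K L).range := by
  refine splits_X_pow_nat_card_sub_X.mem_range_of_isRoot
    (FiniteField.X_pow_card_sub_X_ne_zero K Finite.one_lt_card) ?_
  simp [hx]

theorem card_roots_toFinset_of_derivative_ne_zero {L : Type*} [Field L] [IsAlgClosed L]
    [DecidableEq L] {P : L[X]} (hP : ∀ x, P.IsRoot x → ¬ P.derivative.IsRoot x) :
    P.roots.toFinset.card = P.natDegree := by
  have hP₀ : P ≠ 0 := by
    rintro rfl
    simpa using hP 0
  have h_nodup : P.roots.Nodup := by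
    refine Multiset.nodup_iff_count_le_one.2 fun x ↦ ?_
    rw [count_roots, ← not_lt, one_lt_rootMultiplicity_iff_isRoot hP₀]
    exact fun h ↦ hP x h.1 h.2
  rw [Multiset.toFinset_card_of_nodup h_nodup, (IsAlgClosed.splits P).natDegree_eq_card_roots]

section PentagonPolynomial

variable {R : Type*} [CommRing R]

/-- The polynomial whose roots are the `x` such that `(x, x ^ n)` lies on the pentagon curve of
parameter `a`. -/
noncomputable def pentagonPolynomial (n : ℕ) (a : R) : R[X] :=
  X * X ^ n * (1 - X) * (1 - X ^ n) - C a * (1 - X * X ^ n)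

theorem isRoot_pentagonPolynomial_iff {n : ℕ} {a x : R} :
    (pentagonPolynomial n a).IsRoot x ↔ PentagonCurve a x (x ^ n) := by
  simp [pentagonPolynomial, PentagonCurve, sub_eq_zero]

theorem eval_derivative_pentagonPolynomial {n : ℕ} (hn : (n : R) = 0) (a x : R) :
    (pentagonPolynomial n a).derivative.eval x =
      x ^ n * (1 - x ^ n) * (1 - 2 * x) + a * x ^ n := by
  have h_deriv : (X ^ n : R[X]).derivative = 0 := by
    rw [derivative_X_pow, hn, map_zero, zero_mul]
  simp only [pentagonPolynomial, derivative_sub, derivative_mul, derivative_X, derivative_one,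
    derivative_C, h_deriv, eval_sub, eval_add, eval_mul, eval_pow, eval_X, eval_C, eval_one,
    eval_zero]
  ring

theorem natDegree_pentagonPolynomial [Nontrivial R] {n : ℕ} (hn : 0 < n) (a : R) :
    (pentagonPolynomial n a).natDegree = 2 * n + 2 := by
  have h_expand : pentagonPolynomial n a =
      X ^ (2 * n + 2) - X ^ (2 * n + 1) - X ^ (n + 2) + (1 + C a) * X ^ (n + 1) - C a := by
    rw [pentagonPolynomial]
    ring
  rw [h_expand]
  compute_degree!
  case coeff_ne_zero => simp [show 2 * n ≠ n by omega, show 2 * n + 2 ≠ n + 1 by omega]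
  all_goals omega

end PentagonPolynomial

variable {F L : Type*} [Field F] [Fintype F] [Field L] [Algebra F L]

local notation "q" => Fintype.card F
local notation "σ" => FiniteField.frobeniusAlgHom F L

theorem isPeriodicPt_frobeniusAlgHom_iff {n : ℕ} {x : L} :
    IsPeriodicPt σ n x ↔ x ^ q ^ n = x := by
  rw [IsPeriodicPt, IsFixedPt, FiniteField.coe_frobeniusAlgHom, pow_iterate]

theorem pow_geom_eq_prod_frobeniusAlgHom (x : L) :
    x ^ (1 + q + q ^ 2 + q ^ 3 + q ^ 4) =
      x * σ x * σ (σ x) * σ (σ (σ x)) * σ (σ (σ (σ x))) := by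
  simp only [FiniteField.coe_frobeniusAlgHom]
  ring

theorem card_le_two_mul_card_of_pentagonCurve {a : L} (ha : a ≠ 0) {S : Finset L}
    (hS : ∀ x ∈ S, PentagonCurve a x (σ x)) (hS₂ : ∀ x ∈ S, σ (σ x) = x) :
    #S ≤ 2 * q := by
  classical
  have h_fiber : ∀ x₀ ∈ S, #{x ∈ S | x * σ x = x₀ * σ x₀} ≤ 2 := by
    intro x₀ hx₀
    refine (Finset.card_le_card (t := {x₀, σ x₀}) fun x hx ↦ ?_).trans Finset.card_le_two
    obtain ⟨hxS, hx⟩ := Finset.mem_filter.1 hx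
    simpa using (hS x₀ hx₀).eq_or_eq_of_mul_eq ha (hS x hxS) hx
  have h_image : S.image (fun x ↦ x * σ x) ⊆ Finset.univ.image (algebraMap F L) := by
    intro y hy
    obtain ⟨x, hx, rfl⟩ := Finset.mem_image.1 hy
    have h_fixed : σ (x * σ x) = x * σ x := by rw [map_mul, hS₂ x hx, mul_comm]
    rw [FiniteField.frobeniusAlgHom_apply, ← Nat.card_eq_fintype_card] at h_fixed
    simpa using mem_range_algebraMap_of_pow_card_eq_self h_fixed
  calc #S ≤ 2 * #(S.image fun x ↦ x * σ x) :=
        Finset.card_le_mul_card_image S 2 (Finset.forall_mem_image.2 h_fiber)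
    _ ≤ 2 * q := by
        gcongr
        exact (Finset.card_le_card h_image).trans Finset.card_image_le

variable [IsAlgClosed L]

theorem exists_pentagonCurve_frobenius {a : L} (ha : a ≠ 0) (hσa : σ a = a) :
    ∃ x : L, PentagonCurve a x (σ x) ∧ x * σ x * σ (σ x) * (1 - σ x) = a := by
  classical
  by_contra! h
  have hσσ : ∀ x, PentagonCurve a x (σ x) → σ (σ x) = x := by
    intro x hx
    by_contra hne
    have hx₁ : PentagonCurve a (σ x) (σ (σ x)) := by
      simpa only [hσa] using hx.map (φ := σ)
    exact h x hx (hx.mul_eq_of_ne hx₁ hne)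
  let P : L[X] := pentagonPolynomial q a
  have hP : ∀ x, P.IsRoot x ↔ PentagonCurve a x (σ x) := fun x ↦ isRoot_pentagonPolynomial_iff
  have hP' : ∀ x, P.IsRoot x → ¬ P.derivative.IsRoot x := by
    intro x hx hx'
    have hq : (q : L) = 0 := by
      rw [← map_natCast (algebraMap F L), FiniteField.cast_card_eq_zero, map_zero]
    rw [IsRoot.def, eval_derivative_pentagonPolynomial hq] at hx'
    rw [hP] at hx
    refine h x hx ?_
    rw [hσσ x hx]
    exact hx.mul_eq_of_deriv_eq_zero hx'
  have h_roots : ∀ x ∈ P.roots.toFinset, PentagonCurve a x (σ x) := fun x hx ↦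
    (hP x).1 (isRoot_of_mem_roots (Multiset.mem_toFinset.1 hx))
  have h_card : #P.roots.toFinset = 2 * q + 2 := by
    rw [card_roots_toFinset_of_derivative_ne_zero hP',
      natDegree_pentagonPolynomial Fintype.card_pos]
  have h_card_le : #P.roots.toFinset ≤ 2 * q :=
    card_le_two_mul_card_of_pentagonCurve ha h_roots fun x hx ↦ hσσ x (h_roots x hx)
  omega

theorem exists_isPentagonCycle_pow_eq {a : L} (ha : a ≠ 0) (hσa : σ a = a) :
    ∃ α : L, IsPentagonCycle σ α ∧ α ^ (1 + q + q ^ 2 + q ^ 3 + q ^ 4) = a := by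
  obtain ⟨α, h_curve, h_eq⟩ := exists_pentagonCurve_frobenius ha hσa
  have hα : IsPentagonCycle σ α := .of_pentagonCurve hσa ha h_curve h_eq
  exact ⟨α, hα, by rw [pow_geom_eq_prod_frobeniusAlgHom, hα.prod_eq h_eq]⟩

theorem exists_isHillSolution_frobenius (α : L) : ∃ v : L, v ≠ 0 ∧ IsHillSolution σ α v := by
  -- The substitution `u = σ v / v` turns the Hill equation into a Riccati equation.
  obtain ⟨u, hu⟩ : ∃ u : L, u ^ (q + 1) = α * u - 1 := by
    have h_degree : (X ^ (q + 1) - C α * X + 1 : L[X]).natDegree = q + 1 := by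
      compute_degree!
    obtain ⟨u, hu⟩ := IsAlgClosed.exists_root (X ^ (q + 1) - C α * X + 1 : L[X])
      (natDegree_pos_iff_degree_pos.1 (by omega)).ne'
    simp only [IsRoot.def, eval_add, eval_sub, eval_mul, eval_pow, eval_X, eval_C, eval_one] at hu
    exact ⟨u, by linear_combination hu⟩
  have hu₀ : u ≠ 0 := by
    rintro rfl
    simp at hu
  have hq : 0 < q - 1 := Nat.sub_pos_of_lt Fintype.one_lt_card
  obtain ⟨v, hv⟩ := IsAlgClosed.exists_pow_nat_eq u hq
  have hσv : σ v = u * v := by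
    rw [FiniteField.frobeniusAlgHom_apply, ← hv, pow_sub_one_mul Fintype.card_ne_zero]
  refine ⟨v, ?_, ?_⟩
  · rintro rfl
    exact hu₀ (by rw [← hv, zero_pow hq.ne'])
  · rw [IsHillSolution, hσv, map_mul, hσv, FiniteField.frobeniusAlgHom_apply]
    linear_combination v * hu

theorem exists_frobenius_sub_self_eq (c : L) : ∃ w : L, σ w - w = c := by
  have h_degree : (X ^ q - X - C c : L[X]).natDegree = q := by
    rw [natDegree_sub_C, FiniteField.X_pow_card_sub_X_natDegree_eq L Fintype.one_lt_card]
  obtain ⟨w, hw⟩ := IsAlgClosed.exists_root (X ^ q - X - C c : L[X])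
    (natDegree_pos_iff_degree_pos.1 (h_degree ▸ Fintype.card_pos)).ne'
  exact ⟨w, by simpa [sub_eq_zero] using hw⟩

theorem exists_periodic_frobenius_sub_pow_eq {a : L} (ha : a ≠ 0) (hσa : σ a = a) :
    ∃ w : L, σ w ≠ w ∧ IsPeriodicPt σ 5 w ∧
      (σ (σ w) - w) ^ (1 + q + q ^ 2 + q ^ 3 + q ^ 4) =
        a * (σ w - w) ^ (1 + q + q ^ 2 + q ^ 3 + q ^ 4) := by
  obtain ⟨α, hα, hαa⟩ := exists_isPentagonCycle_pow_eq ha hσa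
  obtain ⟨v, hv₀, hv⟩ := exists_isHillSolution_frobenius (F := F) α
  obtain ⟨w, hw⟩ := exists_frobenius_sub_self_eq (F := F) (v * σ v)⁻¹
  have hσv₀ : σ v ≠ 0 := by simpa using hv₀
  have hv₅ : IsPeriodicPt σ 5 v := hv.isPeriodicPt hα
  have h_norm : ∀ u : L, IsPeriodicPt σ 5 u →
      (σ u) ^ (1 + q + q ^ 2 + q ^ 3 + q ^ 4) = u ^ (1 + q + q ^ 2 + q ^ 3 + q ^ 4) := fun u hu ↦
    pow_pow_geom_of_pow_eq_self (isPeriodicPt_frobeniusAlgHom_iff.1 hu)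
  refine ⟨w, sub_ne_zero.1 (hw ▸ inv_ne_zero (mul_ne_zero hv₀ hσv₀)),
    hv.isPeriodicPt_of_sub_eq hα hv₀ hw, ?_⟩
  rw [hv.map_map_sub_self hv₀ hw, hw, mul_pow, hαa, inv_pow, inv_pow, mul_pow, mul_pow,
    h_norm _ hv₅.apply, h_norm v hv₅]

end FiniteField

theorem stmt_1_general {K : Type*} [Field K] [Finite K] (F : Subfield K) {q : ℕ}
    (hF : Nat.card F = q) (hK : Nat.card K = q ^ 5) {a : K} (haF : a ∈ F) (ha : a ≠ 0) :
    ∃ x : K, x ∉ F ∧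
      (x ^ q ^ 2 - x) ^ (1 + q + q ^ 2 + q ^ 3 + q ^ 4) =
        a * (x ^ q - x) ^ (1 + q + q ^ 2 + q ^ 3 + q ^ 4) := by
  have := Fintype.ofFinite F
  rw [Nat.card_eq_fintype_card] at hF
  subst hF
  let L := AlgebraicClosure K
  have h_fixed : ∀ y ∈ F, y ^ Fintype.card F = y := fun y hy ↦
    congrArg Subtype.val (FiniteField.pow_card (⟨y, hy⟩ : F))
  obtain ⟨w, hw_ne, hw_periodic, hw_pow⟩ :=
    exists_periodic_frobenius_sub_pow_eq (F := F) (a := algebraMap K L a) (by simpa using ha) (by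
      rw [FiniteField.frobeniusAlgHom_apply, ← map_pow, h_fixed a haF])
  obtain ⟨x, rfl⟩ := mem_range_algebraMap_of_pow_card_eq_self (K := K)
    (hK ▸ isPeriodicPt_frobeniusAlgHom_iff.1 hw_periodic)
  refine ⟨x, fun hx ↦ hw_ne ?_, (algebraMap K L).injective ?_⟩
  · rw [FiniteField.frobeniusAlgHom_apply, ← map_pow, h_fixed x hx]
  · simpa [← pow_mul, ← pow_two] using hw_pow

theorem stmt_1 (q : ℕ) (hq : ∃ p n : ℕ, Nat.Prime p ∧ 0 < n ∧ q = p ^ n)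
    (K : Type*) [Field K] (F : Subfield K)
    (hFcard : Nat.card F = q) (hKcard : Nat.card K = q ^ 5)
    (hq223 : 223 ≤ q) (a : K) (haF : a ∈ F) (ha : a ≠ 0) :
    ∃ x : K, x ∉ F ∧
      (x ^ q ^ 2 - x) ^ (1 + q + q ^ 2 + q ^ 3 + q ^ 4) =
        a * (x ^ q - x) ^ (1 + q + q ^ 2 + q ^ 3 + q ^ 4) := by
  have : Finite K := Nat.finite_of_card_ne_zero (by rw [hKcard]; positivity)
  exact stmt_1_general F hFcard hKcard haF ha
end

section
/- Suppose q ≥ 223, let b ∈ K with b ≠ 0, and set f(x) = x^q + b x^{q^2}. Then the linear set L_f = {⟨(x, f(x))⟩_K : x ∈ K, x ≠ 0} of PG(1, q^5) is not maximum scattered; that is, there exist nonzero u, v ∈ K with v/u ∉ F such that the vectors (u, f(u)) and (v, f(v)) of K^2 are linearly dependent over K, i.e. u·(v^q + b v^{q^2}) = v·(u^q + b u^{q^2}). -/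
/-!
The points of `L_f` given by `u` and `v` coincide iff `u` and `v` solve `b w^(q²) + w^q = l w` for a
common slope `l`. Over an algebraic closure, with `σ w = w^q` and `l ≠ 0`, this equation has `q²`
solutions, so it suffices to find `l` for which all of them satisfy `σ⁵ w = w`. Put
`b σ(l) = -(1 + x)`. Iterating the equation, `σ⁵ w = w` holds as soon as `x, σ x, σ² x, …` is a
Lyness sequence, `x σ²(x) = 1 + σ(x)`, on which the Lyness invariant
`(1 + x)(1 + σ x)(1 + x + σ x) / (x σ x)` takes the value `c = -b^(1 + q + q² + q³ + q⁴)`.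

Such an `x` is found by counting. The points `(x, σ x)` of the cubic
`(1 + x)(1 + y)(1 + x + y) = c x y` are given by a polynomial in `x` of degree `2q + 1`. By Vieta,
each of its roots is either a Lyness sequence or fixed by `σ²`, and a `σ²`-fixed multiple root is a
Lyness sequence as well. If there were no Lyness sequence among them, there would be `2q + 1`
distinct roots fixed by `σ²`; but then `x + σ x` lies in the field of `q` elements, and each line
`x + y = s` contains at most two points of the cubic.
-/

open Polynomial FiniteField

theorem card_roots_toFinset_eq_natDegree {L : Type*} [Field L] [DecidableEq L] {P : L[X]}
    (splits : P.Splits) (hP : P ≠ 0) (simple : ∀ x, P.IsRoot x → ¬ P.derivative.IsRoot x) :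
    P.roots.toFinset.card = P.natDegree := by
  rw [splits.natDegree_eq_card_roots, Multiset.toFinset_card_eq_card_iff_nodup,
    Multiset.nodup_iff_count_le_one]
  intro x
  rw [count_roots]
  by_contra! multiple
  obtain ⟨root, derivative_root⟩ := (one_lt_rootMultiplicity_iff_isRoot hP).1 multiple
  exact simple x root derivative_root

theorem card_roots_toFinset_linearized {L : Type*} [Field L] [IsAlgClosed L] [DecidableEq L]
    {q : ℕ} (hq : 1 < q) (hqL : (q : L) = 0) {b l : L} (hb : b ≠ 0) (hl : l ≠ 0) :
    (C b * X ^ q ^ 2 + X ^ q - C l * X).roots.toFinset.card = q ^ 2 := by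
  have hqq : q < q ^ 2 := by nlinarith
  have degree_eq : (C b * X ^ q ^ 2 + X ^ q - C l * X).natDegree = q ^ 2 := by
    compute_degree!
    · simp [hqq.ne', hq.ne', hb]
    all_goals omega
  have derivative_eq : derivative (C b * X ^ q ^ 2 + X ^ q - C l * X) = C (-l) := by
    simp [derivative_X_pow, hqL]
  rw [card_roots_toFinset_eq_natDegree (IsAlgClosed.splits _), degree_eq]
  · exact ne_zero_of_natDegree_gt (degree_eq ▸ hqq)
  · intro x _
    simpa [derivative_eq] using hl

theorem mem_range_algebraMap_of_pow_card_eq_self_s3 {K L : Type*} [Field K] [Fintype K] [Field L]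
    [Algebra K L] {w : L} (hw : w ^ Fintype.card K = w) : w ∈ Set.range (algebraMap K L) := by
  have splits : (X ^ Fintype.card K - X : K[X]).Splits := by
    rw [splits_iff_card_roots, roots_X_pow_card_sub_X,
      X_pow_card_sub_X_natDegree_eq K Fintype.one_lt_card]
    rfl
  refine splits.mem_range_of_isRoot (X_pow_card_sub_X_ne_zero K Fintype.one_lt_card) ?_
  simp [hw]

theorem exists_div_notMem_range_algebraMap {F L : Type*} [Field F] [Fintype F] [Field L]
    [Algebra F L] {S : Finset L} (hS : Fintype.card F < S.card) :
    ∃ u ∈ S, ∃ v ∈ S, u ≠ 0 ∧ v / u ∉ Set.range (algebraMap F L) := by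
  classical
  obtain ⟨u, huS, hu⟩ := Finset.exists_mem_ne (Fintype.one_lt_card.trans hS) 0
  obtain ⟨v, hvS, hv⟩ : ∃ v ∈ S, v ∉ Finset.univ.image fun a : F => algebraMap F L a * u :=
    Finset.exists_mem_notMem_of_card_lt_card (Finset.card_image_le.trans_lt hS)
  refine ⟨u, huS, v, hvS, hu, ?_⟩
  rintro ⟨a, ha⟩
  exact hv (Finset.mem_image.2 ⟨a, Finset.mem_univ a, by rw [ha, div_mul_cancel₀ v hu]⟩)

/-- The equation of the level curve of value `c` of the Lyness invariant
`(1 + x)(1 + y)(1 + x + y) / (x y)`, with denominators cleared. -/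
def lynessCubic {R : Type*} [CommRing R] (c x y : R) : R :=
  (1 + x) * (1 + y) * (1 + x + y) - c * x * y

namespace lynessCubic

section CommRing

variable {R : Type*} [CommRing R]

theorem comm (c x y : R) : lynessCubic c x y = lynessCubic c y x := by
  simp only [lynessCubic]
  ring

theorem map {S G : Type*} [CommRing S] [FunLike G R S] [RingHomClass G R S] (φ : G) (c x y : R) :
    φ (lynessCubic c x y) = lynessCubic (φ c) (φ x) (φ y) := by
  simp [lynessCubic]

-- For fixed `y` the cubic is quadratic in its first argument, with product of roots `1 + y`.
theorem vieta (c x y z : R) : z * lynessCubic c x y - x * lynessCubic c z y =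
    (1 + y) * ((x - z) * (x * z - (1 + y))) := by
  simp only [lynessCubic]
  ring

end CommRing

section Field

variable {L : Type*} [Field L] {c x y z t s : L}

theorem one_add_left_ne_zero (hc : c ≠ 0) (hx : x ≠ 0) (hy : y ≠ 0) (h : lynessCubic c x y = 0) :
    1 + x ≠ 0 := by
  intro hx1
  simp [lynessCubic, hx1, hc, hx, hy] at h

theorem eq_or_mul_eq_one_add (hy : 1 + y ≠ 0) (hxy : lynessCubic c x y = 0)
    (hyz : lynessCubic c y z = 0) : x = z ∨ x * z = 1 + y := by
  have h := vieta c x y z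
  rw [hxy, comm c z y, hyz] at h
  simpa [hy, sub_eq_zero] using h.symm

theorem invariant_eq (hx : x ≠ 0) (hy : y ≠ 0) (h : lynessCubic c x y = 0)
    (hxz : x * z = 1 + y) (hyt : y * t = 1 + z) : (1 + x) * (1 + z + t) = c := by
  apply mul_left_cancel₀ (mul_ne_zero hx hy)
  unfold lynessCubic at h
  linear_combination h + x * (1 + x) * hyt + (1 + x) * (1 + y) * hxz

theorem eq_or_eq_sub_of_line (hc : c ≠ 0) (hx : lynessCubic c x (s - x) = 0)
    (hy : lynessCubic c y (s - y) = 0) : y = x ∨ y = s - x := by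
  have line (w : L) : lynessCubic c w (s - w) = (1 + s) ^ 2 + (1 + s - c) * (w * (s - w)) := by
    simp only [lynessCubic]
    ring
  rw [line] at hx hy
  have hcs : 1 + s - c ≠ 0 := by
    intro h
    have hs : 1 + s = 0 := by simpa [h] using hx
    exact hc (by linear_combination hs - h)
  have factored : (1 + s - c) * ((y - x) * (y - (s - x))) = 0 := by linear_combination hx - hy
  simpa [hcs, sub_eq_zero] using factored

theorem card_le_two_of_line (hc : c ≠ 0) {S : Finset L}
    (hS : ∀ x ∈ S, lynessCubic c x (s - x) = 0) : S.card ≤ 2 := by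
  classical
  obtain rfl | ⟨x, hx⟩ := S.eq_empty_or_nonempty
  · simp
  · have subset_pair : S ⊆ {x, s - x} := fun y hy => by
      simpa using eq_or_eq_sub_of_line hc (hS x hx) (hS y hy)
    exact (Finset.card_le_card subset_pair).trans Finset.card_le_two

end Field

section Endomorphism

variable {L G : Type*} [Field L] [FunLike G L L] [RingHomClass G L L] {φ : G} {c x : L}

theorem ne_zero_of_map (h : lynessCubic c x (φ x) = 0) : x ≠ 0 := by
  rintro rfl
  simp [lynessCubic] at h

theorem one_add_ne_zero (hc : c ≠ 0) (h : lynessCubic c x (φ x) = 0) : 1 + x ≠ 0 :=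
  have hx := ne_zero_of_map h
  one_add_left_ne_zero hc hx ((_root_.map_ne_zero φ).2 hx) h

theorem one_add_map_ne_zero (hc : c ≠ 0) (h : lynessCubic c x (φ x) = 0) : 1 + φ x ≠ 0 :=
  have hx := ne_zero_of_map h
  one_add_left_ne_zero hc ((_root_.map_ne_zero φ).2 hx) hx (comm c x (φ x) ▸ h)

end Endomorphism

end lynessCubic

section LynessPoly

variable {L : Type*} [Field L]

/-- The polynomial whose roots are the `x` for which `(x, x ^ q)` lies on the Lyness cubic. -/
noncomputable def lynessPoly (q : ℕ) (c : L) : L[X] :=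
  lynessCubic (C c) X (X ^ q)

theorem eval_lynessPoly (q : ℕ) (c x : L) :
    (lynessPoly q c).eval x = lynessCubic c x (x ^ q) := by
  simp [lynessPoly, lynessCubic]

theorem natDegree_lynessPoly {q : ℕ} (hq : 1 < q) (c : L) :
    (lynessPoly q c).natDegree = 2 * q + 1 := by
  unfold lynessPoly lynessCubic
  compute_degree!
  · have exponent_eq : 2 * q + 1 = 1 + q + q := by omega
    have exponent_ne : 2 * q + 1 ≠ 1 + q := by omega
    simp [← exponent_eq, exponent_ne, hq.not_ge, hq.le, (zero_lt_one.trans hq).ne']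
  all_goals omega

-- Since `x ^ q` has derivative zero, a multiple root `x` is a double root of the quadratic in
-- `lynessCubic.vieta`.
theorem mul_self_eq_of_multiple_root {q : ℕ} (hqL : (q : L) = 0) {c x : L}
    (hx : 1 + x ^ q ≠ 0) (root : (lynessPoly q c).IsRoot x)
    (derivative_root : (lynessPoly q c).derivative.IsRoot x) : x * x = 1 + x ^ q := by
  have derivative_eq : (lynessPoly q c).derivative.eval x =
      (1 + x ^ q) * (2 + 2 * x + x ^ q) - c * x ^ q := by
    simp [lynessPoly, lynessCubic, derivative_X_pow, hqL]
    ring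
  rw [IsRoot.def, eval_lynessPoly, lynessCubic] at root
  rw [IsRoot.def, derivative_eq] at derivative_root
  have factored : (1 + x ^ q) * (x * x - (1 + x ^ q)) = 0 := by
    linear_combination x * derivative_root - root
  simpa [hx, sub_eq_zero] using factored

end LynessPoly

section Frobenius

variable {F L : Type*} [Field F] [Fintype F] [Field L] [Algebra F L]

local notation "σ" => frobeniusAlgHom F L

variable (F) in
theorem natCast_card_eq_zero_of_algebra : (Fintype.card F : L) = 0 := by
  rw [← map_natCast (algebraMap F L), Nat.cast_card_eq_zero, map_zero]

theorem frobeniusAlgHom_iterate_apply (n : ℕ) (w : L) : σ^[n] w = w ^ Fintype.card F ^ n := by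
  rw [coe_frobeniusAlgHom, pow_iterate]

theorem card_le_of_frobenius_sq_fixed {c : L} (hc : c ≠ 0) {S : Finset L}
    (cubic : ∀ x ∈ S, lynessCubic c x (σ x) = 0) (fixed : ∀ x ∈ S, σ (σ x) = x) :
    S.card ≤ 2 * Fintype.card F := by
  classical
  have trace_mem (x) (hx : x ∈ S) : x + σ x ∈ Finset.univ.image (algebraMap F L) := by
    have trace_fixed : σ (x + σ x) = x + σ x := by rw [map_add, fixed x hx, add_comm]
    simpa using mem_range_algebraMap_of_pow_card_eq_self_s3 trace_fixed
  have fiber_card (s : L) : (S.filter fun x => x + σ x = s).card ≤ 2 := by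
    refine lynessCubic.card_le_two_of_line (s := s) hc fun x hx => ?_
    obtain ⟨hxS, rfl⟩ := Finset.mem_filter.1 hx
    rw [add_sub_cancel_left]
    exact cubic x hxS
  calc
    S.card ≤ 2 * (Finset.univ.image (algebraMap F L)).card :=
      Finset.card_le_mul_card_image_of_maps_to trace_mem 2 fun s _ => fiber_card s
    _ ≤ 2 * Fintype.card F := Nat.mul_le_mul_left 2 Finset.card_image_le

theorem exists_lyness_of_invariant [IsAlgClosed L] {c : L} (hc : c ≠ 0) (hσc : σ c = c) :
    ∃ x : L, lynessCubic c x (σ x) = 0 ∧ x * σ (σ x) = 1 + σ x := by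
  classical
  by_contra! no_lyness
  have cubic (x) (hx : (lynessPoly (Fintype.card F) c).IsRoot x) : lynessCubic c x (σ x) = 0 := by
    rwa [IsRoot.def, eval_lynessPoly] at hx
  have fixed (x) (hx : (lynessPoly (Fintype.card F) c).IsRoot x) : σ (σ x) = x := by
    have shifted : lynessCubic c (σ x) (σ (σ x)) = 0 := by
      simpa only [lynessCubic.map, hσc, map_zero] using congrArg σ (cubic x hx)
    have dichotomy := lynessCubic.eq_or_mul_eq_one_add
      (lynessCubic.one_add_map_ne_zero hc (cubic x hx)) (cubic x hx) shifted
    exact (dichotomy.resolve_right (no_lyness x (cubic x hx))).symm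
  have simple (x) (hx : (lynessPoly (Fintype.card F) c).IsRoot x) :
      ¬ (lynessPoly (Fintype.card F) c).derivative.IsRoot x := by
    intro hx'
    apply no_lyness x (cubic x hx)
    rw [fixed x hx]
    exact mul_self_eq_of_multiple_root (natCast_card_eq_zero_of_algebra F)
      (lynessCubic.one_add_map_ne_zero hc (cubic x hx)) hx hx'
  have degree_eq := natDegree_lynessPoly (Fintype.one_lt_card (α := F)) c
  have poly_ne_zero : lynessPoly (Fintype.card F) c ≠ 0 :=
    ne_zero_of_natDegree_gt (n := 0) (by omega)
  have card_eq := card_roots_toFinset_eq_natDegree (IsAlgClosed.splits _) poly_ne_zero simple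
  have card_le := card_le_of_frobenius_sq_fixed hc
    (fun x hx => cubic x (isRoot_of_mem_roots (Multiset.mem_toFinset.1 hx)))
    (fun x hx => fixed x (isRoot_of_mem_roots (Multiset.mem_toFinset.1 hx)))
  omega

end Frobenius

section Slope

theorem five_step_recurrence {R : Type*} [CommRing R]
    {b₀ b₁ b₂ b₃ l₀ l₁ l₂ l₃ w₀ w₁ w₂ w₃ w₄ w₅ x₀ x₁ x₂ : R}
    (hw₂ : b₀ * w₂ + w₁ = l₀ * w₀) (hw₃ : b₁ * w₃ + w₂ = l₁ * w₁)
    (hw₄ : b₂ * w₄ + w₃ = l₂ * w₂) (hw₅ : b₃ * w₅ + w₄ = l₃ * w₃)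
    (hx₀ : b₀ * l₁ = -(1 + x₀)) (hx₁ : b₁ * l₂ = -(1 + x₁)) (hx₂ : b₂ * l₃ = -(1 + x₂)) :
    b₀ * b₁ * b₂ * b₃ * w₅ = l₀ * (1 + x₁ + x₂) * w₀ + (x₀ * x₂ - (1 + x₁)) * w₁ := by
  linear_combination b₀ * b₁ * b₂ * hw₅ - b₀ * b₁ * hw₄ - b₀ * x₂ * hw₃ + (1 + x₁ + x₂) * hw₂ +
    b₀ * b₁ * w₃ * hx₂ - b₀ * w₂ * hx₁ - x₂ * w₁ * hx₀

theorem iterate_five_eq_of_lyness {L G : Type*} [Field L] [FunLike G L L] [RingHomClass G L L]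
    {φ : G} {b l x : L} (hb : b ≠ 0) (hl : b * φ l = -(1 + x))
    (lyness : x * φ (φ x) = 1 + φ x)
    (cubic : lynessCubic (-(b * φ b * φ (φ b) * φ (φ (φ b)) * φ (φ (φ (φ b))))) x (φ x) = 0)
    {w : L} (hw : b * φ (φ w) + φ w = l * w) : φ^[5] w = w := by
  have hx := lynessCubic.ne_zero_of_map cubic
  have shift {y z : L} (h : y = z) : φ y = φ z := congrArg φ h
  have hl₁ := shift hl
  have hl₂ := shift hl₁
  have hw₁ := shift hw
  have hw₂ := shift hw₁
  have hw₃ := shift hw₂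
  have lyness₁ := shift lyness
  simp only [map_neg, map_mul, map_add, map_one] at hl₁ hl₂ hw₁ hw₂ hw₃ lyness₁
  have invariant := lynessCubic.invariant_eq hx ((_root_.map_ne_zero φ).2 hx) cubic lyness lyness₁
  have slope_eq : l * (1 + φ x + φ (φ x)) = b * φ b * φ (φ b) * φ (φ (φ b)) := by
    have φ_injective : Function.Injective φ := (RingHomClass.toRingHom φ).injective
    apply φ_injective
    apply mul_left_cancel₀ hb
    simp only [map_mul, map_add, map_one]
    linear_combination (1 + φ (φ x) + φ (φ (φ x))) * hl - invariant
  have step := five_step_recurrence hw hw₁ hw₂ hw₃ hl hl₁ hl₂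
  rw [slope_eq, lyness, sub_self, zero_mul, add_zero] at step
  refine mul_left_cancel₀ ?_ step
  simp [hb]

variable {F L : Type*} [Field F] [Fintype F] [Field L] [Algebra F L]

local notation "σ" => frobeniusAlgHom F L

theorem exists_slope_frobenius_iterate_five_eq [IsAlgClosed L] {b : L} (hb : b ≠ 0)
    (hσb : σ^[5] b = b) :
    ∃ l : L, l ≠ 0 ∧ ∀ w : L, b * σ (σ w) + σ w = l * w → σ^[5] w = w := by
  set c : L := -(b * σ b * σ (σ b) * σ (σ (σ b)) * σ (σ (σ (σ b)))) with c_def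
  have hc : c ≠ 0 := by simp [c_def, hb]
  have hσc : σ c = c := by
    replace hσb : σ (σ (σ (σ (σ b)))) = b := hσb
    simp only [c_def, map_neg, map_mul, hσb]
    ring
  obtain ⟨x, cubic, lyness⟩ := exists_lyness_of_invariant hc hσc
  obtain ⟨l, hl⟩ : ∃ l, σ l = -(1 + x) / b :=
    IsAlgClosed.exists_pow_nat_eq (-(1 + x) / b) Fintype.card_pos
  have hl' : b * σ l = -(1 + x) := by rw [hl, mul_div_cancel₀ _ hb]
  refine ⟨l, ?_, fun w => iterate_five_eq_of_lyness hb hl' lyness cubic⟩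
  rintro rfl
  apply lynessCubic.one_add_ne_zero hc cubic
  rw [map_zero, mul_zero] at hl'
  exact neg_eq_zero.1 hl'.symm

end Slope

section FiniteField

variable {F K : Type*} [Field F] [Fintype F] [Field K] [Fintype K] [Algebra F K]

local notation "L" => AlgebraicClosure K

theorem exists_slope_solutions_mem_range (hcard : Fintype.card K = Fintype.card F ^ 5) {b : K}
    (hb : b ≠ 0) :
    ∃ l : L, l ≠ 0 ∧ ∀ w : L,
      algebraMap K L b * w ^ Fintype.card F ^ 2 + w ^ Fintype.card F = l * w →
        w ∈ Set.range (algebraMap K L) := by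
  have frobenius_five (w : L) : (frobeniusAlgHom F L)^[5] w = w ^ Fintype.card K := by
    rw [frobeniusAlgHom_iterate_apply, hcard]
  have hσb : (frobeniusAlgHom F L)^[5] (algebraMap K L b) = algebraMap K L b := by
    rw [frobenius_five, ← map_pow, FiniteField.pow_card]
  obtain ⟨l, hl, fixed⟩ :=
    exists_slope_frobenius_iterate_five_eq ((_root_.map_ne_zero (algebraMap K L)).2 hb) hσb
  refine ⟨l, hl, fun w hw => mem_range_algebraMap_of_pow_card_eq_self_s3 ?_⟩
  rw [← frobenius_five]
  apply fixed
  rwa [← frobeniusAlgHom_iterate_apply] at hw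

theorem exists_finset_card_eq_sq_proportional (hcard : Fintype.card K = Fintype.card F ^ 5)
    {b : K} (hb : b ≠ 0) :
    ∃ S : Finset K, S.card = Fintype.card F ^ 2 ∧ ∀ u ∈ S, ∀ v ∈ S,
      u * (v ^ Fintype.card F + b * v ^ Fintype.card F ^ 2) =
        v * (u ^ Fintype.card F + b * u ^ Fintype.card F ^ 2) := by
  classical
  obtain ⟨l, hl, mem_range⟩ := exists_slope_solutions_mem_range hcard hb
  set P : L[X] := C (algebraMap K L b) * X ^ Fintype.card F ^ 2 + X ^ Fintype.card F - C l * X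
    with P_def
  have card_roots : P.roots.toFinset.card = Fintype.card F ^ 2 :=
    card_roots_toFinset_linearized Fintype.one_lt_card (natCast_card_eq_zero_of_algebra F)
      ((_root_.map_ne_zero (algebraMap K L)).2 hb) hl
  have solution {w : L} (hw : w ∈ P.roots.toFinset) :
      algebraMap K L b * w ^ Fintype.card F ^ 2 + w ^ Fintype.card F = l * w := by
    simpa [P_def, sub_eq_zero] using isRoot_of_mem_roots (Multiset.mem_toFinset.1 hw)
  refine ⟨P.roots.toFinset.preimage (algebraMap K L) (algebraMap K L).injective.injOn, ?_, ?_⟩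
  · rw [Finset.card_preimage, Finset.filter_true_of_mem fun w hw => mem_range w (solution hw),
      card_roots]
  · intro u hu v hv
    apply (algebraMap K L).injective
    simp only [map_mul, map_add, map_pow]
    linear_combination algebraMap K L u * solution (Finset.mem_preimage.1 hv) -
      algebraMap K L v * solution (Finset.mem_preimage.1 hu)

end FiniteField

theorem stmt_3_general {K : Type*} [Field K] [Finite K] (F : Subfield K) {q : ℕ}
    (hFcard : Nat.card F = q) (hKcard : Nat.card K = q ^ 5) {b : K} (hb : b ≠ 0) :
    ∃ u v : K, u ≠ 0 ∧ v ≠ 0 ∧ v / u ∉ F ∧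
      u * (v ^ q + b * v ^ q ^ 2) = v * (u ^ q + b * u ^ q ^ 2) := by
  have := Fintype.ofFinite K
  have := Fintype.ofFinite F
  rw [Nat.card_eq_fintype_card] at hFcard hKcard
  subst hFcard
  obtain ⟨S, card_S, proportional⟩ := exists_finset_card_eq_sq_proportional hKcard hb
  have card_lt : Fintype.card F < S.card := by
    rw [card_S]
    exact lt_self_pow₀ Fintype.one_lt_card one_lt_two
  obtain ⟨u, hu, v, hv, hu0, hvu⟩ := exists_div_notMem_range_algebraMap card_lt
  have hvu : v / u ∉ F := fun h => hvu ⟨⟨v / u, h⟩, rfl⟩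
  refine ⟨u, v, hu0, ?_, hvu, proportional u hu v hv⟩
  rintro rfl
  exact hvu (by simp)

theorem stmt_3 (q : ℕ) (hq : ∃ p n : ℕ, Nat.Prime p ∧ 0 < n ∧ q = p ^ n)
    (K : Type*) [Field K] (F : Subfield K)
    (hFcard : Nat.card F = q) (hKcard : Nat.card K = q ^ 5)
    (hq223 : 223 ≤ q) (b : K) (hb : b ≠ 0) :
    ∃ u v : K, u ≠ 0 ∧ v ≠ 0 ∧ v / u ∉ F ∧
      u * (v ^ q + b * v ^ q ^ 2) = v * (u ^ q + b * u ^ q ^ 2) := by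
  have : Finite K := Nat.finite_of_card_ne_zero (by rw [hKcard]; positivity)
  exact stmt_3_general F hFcard hKcard hb
end

section
/- Let α, β ∈ K with β ≠ 0 and α^q/β^{q+1} ∉ F (equivalently, (α^q/β^{q+1})^q ≠ α^q/β^{q+1}). Then L_{α,β} is not maximum scattered. -/
/-- The `F`-linear map `T_{α,β} : K → K²`, `x ↦ (x − α x^{q²}, x^q − β x^{q²})`. -/
def Tmap (q : ℕ) {K : Type*} [Field K] (α β : K) (x : K) : K × K :=
  (x - α * x ^ q ^ 2, x ^ q - β * x ^ q ^ 2)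

/-- The linear set `L_{α,β}` is maximum scattered: `T_{α,β}` is injective and
`K`-linear dependence of `T_{α,β}(x)` and `T_{α,β}(y)` for nonzero `x, y` forces
`y/x ∈ F`. -/
def IsMaxScattered (q : ℕ) {K : Type*} [Field K] (F : Subfield K) (α β : K) : Prop :=
  Function.Injective (Tmap q α β) ∧
    ∀ x y : K, x ≠ 0 → y ≠ 0 →
      ¬ LinearIndependent K ![Tmap q α β x, Tmap q α β y] → y / x ∈ F

/-!
Put `α = d * β * β ^ q ^ 4`, so that the hypothesis says that `d` has five distinct conjugates. If
`z ≠ 0` satisfies `z ^ q ^ 2 + β * y * z ^ q + α * z = 0`, then `T` sends every `w / z` with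
`w ^ q ^ 2 + y * w ^ q + w = 0` to the same point, so it is enough that the latter equation has more
than `q` solutions. It has `q ^ 2` of them as soon as `y * y ^ q = 1 + y ^ q ^ 3`. For such a `y`
the Dickson determinant that decides the existence of `z` reduces to a linear form in the conjugates
of `y`, and the substitution `y = -x / (1 + x)` turns the problem into finding `x` in `K` with
`x * x ^ q ^ 2 = 1 + x ^ q` and a prescribed linear form `c + ∑ i, e i * x ^ q ^ i` equal to zero.

The relation gives the period five on its own (the pentagon recurrence), so a solution `x` in the
algebraic closure already lies in `K`. On the relation the linear form becomes, up to a nonzero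
factor, the polynomial `slice`, and there is no common zero only if `slice` divides `sliceCofactor`.
In that case the `q`-th power of a root of the quadratic equation behind `slice` yields an element
of a quadratic order over `K[X]` whose trace and norm are too small to exist: the imaginary part has
degree `q - 2` by the discriminant and divides a linear polynomial by differentiation, leaving only
`q ≤ 3`, where coefficients are compared.
-/

open Polynomial
open scoped QuadraticAlgebra
open QuadraticAlgebra (trace trace_def trace_omega norm_def re_add re_sub re_mul
  re_smul re_star im_add im_sub im_mul im_smul im_star im_zero omega_re omega_im algebraMap_re
  algebraMap_im algebraMap_trace_eq_add_star)

section QuadraticOrder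

variable {R : Type*} [CommRing R] {a b : R}

theorem quadraticAlgebra_trace_pow_char_pow (p k : ℕ) [Fact p.Prime] [CharP R p]
    (z : QuadraticAlgebra R a b) : trace (z ^ p ^ k) = trace z ^ p ^ k := by
  have hinj : Function.Injective (algebraMap R (QuadraticAlgebra R a b)) :=
    fun r s hrs ↦ by simpa using congrArg QuadraticAlgebra.re hrs
  have := charP_of_injective_algebraMap hinj p
  apply hinj
  rw [RingHom.map_pow, algebraMap_trace_eq_add_star, algebraMap_trace_eq_add_star, star_pow,
    add_pow_char_pow]

theorem dvd_re_add_im_mul_sub_pow (t : R) (n : ℕ) :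
    t ^ 2 - b * t - a ∣
      ((ω : QuadraticAlgebra R a b) ^ n).re + ((ω : QuadraticAlgebra R a b) ^ n).im * t -
        t ^ n := by
  induction n with
  | zero => simp
  | succ n ih =>
    obtain ⟨r, hr⟩ := ih
    refine ⟨t * r - ((ω : QuadraticAlgebra R a b) ^ n).im, ?_⟩
    simp only [pow_succ _ n, re_mul, im_mul, omega_re, omega_im]
    linear_combination t * hr

theorem trace_mul_star_omega (z : QuadraticAlgebra R a b) :
    trace (z * star ω) = b * z.re - 2 * a * z.im := by
  simp only [trace_def, re_mul, im_mul, re_star, im_star, omega_re, omega_im]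
  ring

theorem norm_sub_algebraMap (z : QuadraticAlgebra R a b) (r : R) :
    QuadraticAlgebra.norm (z - algebraMap R _ r) =
      QuadraticAlgebra.norm z - r * trace z + r ^ 2 := by
  simp only [norm_def, trace_def, re_sub, im_sub, algebraMap_re, algebraMap_im, sub_zero]
  ring

theorem norm_smul_add_algebraMap (z : QuadraticAlgebra R a b) (r s : R) :
    QuadraticAlgebra.norm (r • z + algebraMap R _ s) =
      r ^ 2 * QuadraticAlgebra.norm z + r * s * trace z + s ^ 2 := by
  simp only [norm_def, trace_def, re_add, im_add, re_smul, im_smul, algebraMap_re, algebraMap_im,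
    smul_eq_mul, add_zero]
  ring

theorem dvd_norm_of_dvd {z : QuadraticAlgebra R a b} {r : R} (hre : r ∣ z.re) (him : r ∣ z.im) :
    r ∣ QuadraticAlgebra.norm z := by
  rw [norm_def]
  exact dvd_sub ((hre.mul_right _).add (him.mul_left _)) (him.mul_left _)

theorem norm_algebraMap_sub_omega (r : R) :
    QuadraticAlgebra.norm (algebraMap R (QuadraticAlgebra R a b) r - ω) = r ^ 2 - b * r - a := by
  simp only [norm_def, re_sub, im_sub, algebraMap_re, algebraMap_im, omega_re, omega_im]
  ring

theorem trace_sq_sub_four_mul_norm (z : QuadraticAlgebra R a b) :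
    trace z ^ 2 - 4 * QuadraticAlgebra.norm z = (b ^ 2 + 4 * a) * z.im ^ 2 := by
  simp only [norm_def, trace_def]
  ring

theorem trace_sub_algebraMap_mul_star (z : QuadraticAlgebra R a b) (r t : R) :
    trace ((z - algebraMap R _ r) * star (algebraMap R _ t - ω)) =
      t * trace z - r * (2 * t - b) - trace (z * star ω) := by
  simp only [trace_def, re_mul, im_mul, re_sub, im_sub, re_star, im_star, star_sub, algebraMap_re,
    algebraMap_im, omega_re, omega_im]
  ring

theorem exists_smul_eq_mul_star_of_dvd {A g t : R} (hg : A * g = t ^ 2 - b * t - a)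
    {z : QuadraticAlgebra R a b} (hz : A ∣ z.re + z.im * t) :
    ∃ Φ : QuadraticAlgebra R a b, A • Φ = z * star (algebraMap R _ t - ω) := by
  obtain ⟨φ, hφ⟩ := hz
  refine ⟨⟨φ * (t - b) - g * z.im, φ⟩, ?_⟩
  ext
  · simp only [re_smul, smul_eq_mul, star_sub, re_mul, re_sub, im_sub, re_star, im_star,
      algebraMap_re, algebraMap_im, omega_re, omega_im]
    linear_combination (b - t) * hφ - z.im * hg
  · simp only [im_smul, smul_eq_mul, star_sub, im_mul, re_sub, im_sub, re_star, im_star,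
      algebraMap_re, algebraMap_im, omega_re, omega_im]
    linear_combination -hφ

theorem exists_root_of_norm_eq_zero [IsDomain R] [IsIntegrallyClosed R] {z : QuadraticAlgebra R a b}
    (hz : QuadraticAlgebra.norm z = 0) (hne : z ≠ 0) : ∃ y : R, y ^ 2 + b * y - a = 0 := by
  have him : z.im ≠ 0 := by
    intro him
    refine hne (QuadraticAlgebra.ext ?_ him)
    simpa [norm_def, him] using hz
  have him' : algebraMap R (FractionRing R) z.im ≠ 0 := by simpa using him
  have hroot : (algebraMap R (FractionRing R) z.re / algebraMap R _ z.im) ^ 2 +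
      algebraMap R _ b * (algebraMap R _ z.re / algebraMap R _ z.im) - algebraMap R _ a = 0 := by
    have := congrArg (algebraMap R (FractionRing R)) hz
    simp only [norm_def, map_sub, map_add, map_mul, map_zero] at this
    field_simp
    linear_combination this
  obtain ⟨y, hy⟩ := IsIntegrallyClosed.algebraMap_eq_of_integral (R := R)
    (x := algebraMap R (FractionRing R) z.re / algebraMap R _ z.im)
    ⟨X ^ 2 + C b * X - C a, by monicity!, by simpa using hroot⟩
  refine ⟨y, IsFractionRing.injective R (FractionRing R) ?_⟩
  simpa [hy] using hroot

end QuadraticOrder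

section PolynomialOrder

variable {R : Type*} [CommRing R] {a b : R[X]}

theorem im_dvd_derivative_norm_sub (z : QuadraticAlgebra R[X] a b) :
    z.im ∣ derivative (QuadraticAlgebra.norm z) - z.re * derivative (trace z) := by
  refine ⟨b * derivative z.re - derivative a * z.im - 2 * a * derivative z.im, ?_⟩
  simp only [norm_def, trace_def, derivative_add, derivative_sub,
    derivative_mul, derivative_ofNat]
  ring

theorem natDegree_omega_pow_le {s d : ℕ} (hsd : s ≤ d) (ha : a.natDegree ≤ s + d)
    (hb : b.natDegree ≤ d) (m : ℕ) :
    ((ω : QuadraticAlgebra R[X] a b) ^ (m + 1)).re.natDegree ≤ d * m + s ∧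
      ((ω : QuadraticAlgebra R[X] a b) ^ (m + 1)).im.natDegree ≤ d * m := by
  induction m with
  | zero => simp
  | succ m ih =>
    obtain ⟨hre, him⟩ := ih
    simp only [pow_succ _ (m + 1), re_mul, im_mul,
      omega_re, omega_im, mul_zero, mul_one, zero_add, add_zero]
    have hre' := natDegree_mul_le_of_le ha him
    have him' := natDegree_mul_le_of_le hb him
    rw [mul_add_one]
    exact ⟨hre'.trans (by lia),
      (natDegree_add_le_of_degree_le (hre.trans (by lia)) him').trans_eq (add_comm _ _)⟩

theorem natDegree_trace_omega_pow_mul_star_omega_le {s d : ℕ} (hsd : s ≤ d)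
    (ha : a.natDegree ≤ s + d) (hb : b.natDegree ≤ d) (m : ℕ) :
    (trace ((ω : QuadraticAlgebra R[X] a b) ^ (m + 1) * star ω)).natDegree ≤
      d * (m + 1) + s := by
  obtain ⟨hre, him⟩ := natDegree_omega_pow_le hsd ha hb m
  rw [trace_mul_star_omega, mul_assoc, ← C_ofNat]
  refine (natDegree_sub_le_of_le (natDegree_mul_le_of_le hb hre)
    ((natDegree_C_mul_le _ _).trans (natDegree_mul_le_of_le ha him))).trans (max_le ?_ ?_) <;> lia

end PolynomialOrder

/-- The five entries are pairwise distinct and the `q`-th power map permutes them cyclically, as it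
does with the conjugates over `𝔽_q` of an element of degree five. -/
structure IsConjugateCycle {K : Type*} [Field K] (q : ℕ) (e : Fin 5 → K) : Prop where
  pow_eq (i : Fin 5) : e i ^ q = e (i + 1)
  injective : Function.Injective e

namespace IsConjugateCycle

variable {K : Type*} [Field K] {q : ℕ} {e : Fin 5 → K}

theorem of_ne (hpow : ∀ i, e i ^ q = e (i + 1)) (hne : e 0 ≠ e 1) : IsConjugateCycle q e := by
  have hiterate (m : ℕ) : (· ^ q)^[m] (e 0) = e (Fin.ofNat 5 m) := by
    induction m with
    | zero => rfl
    | succ m ih =>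
      rw [Function.iterate_succ_apply', ih, hpow, show Fin.ofNat 5 m + 1 = Fin.ofNat 5 (m + 1) by
        simp [Fin.ext_iff, Fin.val_add]]
  have hperiod : Function.minimalPeriod (· ^ q) (e 0) = 5 :=
    Function.minimalPeriod_eq_prime (hp := ⟨Nat.prime_five⟩) (hiterate 5) fun h ↦
      hne (h.symm.trans (hpow 0))
  refine ⟨hpow, fun i j hij ↦ Fin.ext ?_⟩
  refine Function.iterate_injOn_Iio_minimalPeriod (f := (· ^ q)) (x := e 0) (by simp [hperiod])
    (by simp [hperiod]) ?_
  simp only [hiterate, Fin.ofNat_val_eq_self, hij]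

theorem shift (he : IsConjugateCycle q e) (j : Fin 5) :
    IsConjugateCycle q fun i ↦ e (i + j) :=
  ⟨fun i ↦ by rw [he.pow_eq, add_right_comm], he.injective.comp (add_left_injective j)⟩

theorem ne_zero (he : IsConjugateCycle q e) (i : Fin 5) : e i ≠ 0 := by
  intro hi
  rcases eq_or_ne q 0 with rfl | hq
  · have hone (j : Fin 5) : e (j + 1) = 1 := by rw [← he.pow_eq, pow_zero]
    exact absurd (he.injective ((hone 0).trans (hone 1).symm)) (by decide)
  · have := he.pow_eq i
    rw [hi, zero_pow hq, ← hi] at this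
    exact absurd (he.injective this) (by simp)

theorem two_le {p k : ℕ} (hp : p.Prime) (he : IsConjugateCycle (p ^ k) e) : 2 ≤ p ^ k := by
  rcases eq_or_ne k 0 with rfl | hk
  · have := he.pow_eq 0
    rw [pow_zero, pow_one] at this
    exact absurd (he.injective this) (by decide)
  · exact hp.two_le.trans (Nat.le_self_pow hk p)

theorem mul_add_two (he : IsConjugateCycle q e) :
    IsConjugateCycle q fun i ↦ e i * e (i + 2) := by
  refine of_ne (fun i ↦ by rw [mul_pow, he.pow_eq, he.pow_eq, add_right_comm]) fun h ↦ ?_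
  change e 0 * e 2 = e 1 * e 3 at h
  have h' : e 1 * e 3 = e 2 * e 4 := by
    simpa [mul_pow, he.pow_eq] using congrArg (· ^ q) h
  have : e 0 = e 4 := mul_right_cancel₀ (he.ne_zero 2) (by linear_combination h + h')
  exact absurd (he.injective this) (by decide)

end IsConjugateCycle

section Slice

variable {K : Type*} [Field K]

/-- The leading coefficient of `slice`, seen as a quadratic polynomial in `X ^ q`. -/
noncomputable def sliceLead (e : Fin 5 → K) : K[X] := C (e 1) * X + C (e 2)

/-- The middle coefficient of `slice`, seen as a quadratic polynomial in `X ^ q`. -/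
noncomputable def sliceMid (e : Fin 5 → K) (c : K) : K[X] :=
  C (e 0) * X ^ 2 + C c * X + C (e 2 + e 3)

/-- The factor other than `1 + X` of the constant coefficient of `slice`, seen as a quadratic
polynomial in `X ^ q`. -/
noncomputable def sliceLine (e : Fin 5 → K) : K[X] := C (e 4) * X + C (e 3)

/-- The polynomial in `x` obtained from `x ^ (1 + q) * (c + ∑ i, e i * x ^ q ^ i)` by eliminating
`x ^ q ^ 2`, `x ^ q ^ 3` and `x ^ q ^ 4` through the relation `x * x ^ q ^ 2 = 1 + x ^ q`. -/
noncomputable def slice (q : ℕ) (e : Fin 5 → K) (c : K) : K[X] :=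
  sliceLead e * (X ^ q) ^ 2 + sliceMid e c * X ^ q + (1 + X) * sliceLine e

/-- The quotient of `X * slice q e c ^ q - slice q e c * (X ^ q) ^ q` by the polynomial
`X * (X ^ q) ^ q - X ^ q - 1` of the relation `x * x ^ q ^ 2 = 1 + x ^ q`, when the `q`-th power map
permutes `e` cyclically and fixes `c`. -/
noncomputable def sliceCofactor (q : ℕ) (e : Fin 5 → K) : K[X] :=
  sliceLead e ^ q * (X ^ q) ^ q - sliceLine e ^ q * X

/-- The order over `K[X]` generated by a root `ω` of the quadratic polynomial whose value at
`sliceLead e * X ^ q` is `sliceLead e * slice q e c`. -/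
abbrev SliceOrder (e : Fin 5 → K) (c : K) : Type _ :=
  QuadraticAlgebra K[X] (-((1 + X) * sliceLine e * sliceLead e)) (-sliceMid e c)

variable {e : Fin 5 → K} {c : K}

theorem slice_mul_sliceLead (q : ℕ) :
    slice q e c * sliceLead e = (sliceLead e * X ^ q) ^ 2 - -sliceMid e c * (sliceLead e * X ^ q) -
      -((1 + X) * sliceLine e * sliceLead e) := by
  rw [slice]
  ring

theorem natDegree_slice (he : e 1 ≠ 0) {q : ℕ} (hq : 2 ≤ q) :
    (slice q e c).natDegree = 2 * q + 1 := by
  have hlead : (sliceLead e * (X ^ q) ^ 2).natDegree = 2 * q + 1 := by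
    rw [sliceLead, ← pow_mul]
    compute_degree
    · simpa [add_comm, mul_comm] using he
    all_goals lia
  have hlow : (sliceMid e c * X ^ q + (1 + X) * sliceLine e).natDegree ≤ q + 2 := by
    rw [sliceMid, sliceLine]
    compute_degree
    lia
  rw [slice, add_assoc, natDegree_add_eq_left_of_natDegree_lt (by lia), hlead]

/-- The element `ω ^ q - X * sliceLine e ^ q` of the order, whose trace, norm and residue at a root
of `slice` are known. -/
noncomputable def frobeniusLift (q : ℕ) (e : Fin 5 → K) (c : K) : SliceOrder e c :=
  ω ^ q - algebraMap K[X] _ (X * sliceLine e ^ q)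

theorem slice_dvd_frobeniusLift {q : ℕ} (h : slice q e c ∣ sliceCofactor q e) :
    slice q e c ∣ (frobeniusLift q e c).re +
      (frobeniusLift q e c).im * (sliceLead e * X ^ q) := by
  have hpow := (Dvd.intro _ (slice_mul_sliceLead q)).trans
    (dvd_re_add_im_mul_sub_pow (a := -((1 + X) * sliceLine e * sliceLead e)) (b := -sliceMid e c)
      (sliceLead e * X ^ q) q)
  convert dvd_add hpow h using 1
  simp only [frobeniusLift, sliceCofactor, re_sub, im_sub, algebraMap_re, algebraMap_im, mul_pow]
  ring

/-- The relations satisfied by the quotient of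
`frobeniusLift q e c * star (sliceLead e * X ^ q - ω)` by `slice q e c`, with the constant term `κ`
of the trace left free. -/
structure HasFrobeniusQuotientRelations (q : ℕ) (Φ : SliceOrder e c) (κ : K) : Prop where
  trace_eq : trace Φ = C κ - C (e 0) * X - C (e 1) * X ^ q
  norm_eq : QuadraticAlgebra.norm Φ = sliceLead e * (C (e 0) * X ^ q + C (e 4))

section Frobenius

variable {p k : ℕ} [Fact p.Prime] [CharP K p]

theorem sliceLead_pow (he : IsConjugateCycle (p ^ k) e) :
    sliceLead e ^ p ^ k = C (e 2) * X ^ p ^ k + C (e 3) := by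
  simp [sliceLead, add_pow_char_pow, mul_pow, ← C_pow, he.pow_eq]

theorem sliceLine_pow (he : IsConjugateCycle (p ^ k) e) :
    sliceLine e ^ p ^ k = C (e 0) * X ^ p ^ k + C (e 4) := by
  simp [sliceLine, add_pow_char_pow, mul_pow, ← C_pow, he.pow_eq]

theorem sliceMid_pow (he : IsConjugateCycle (p ^ k) e) (hc : c ^ p ^ k = c) :
    sliceMid e c ^ p ^ k = C (e 1) * (X ^ p ^ k) ^ 2 + C c * X ^ p ^ k + C (e 3 + e 4) := by
  simp [sliceMid, add_pow_char_pow, mul_pow, ← C_pow, he.pow_eq, hc, pow_right_comm]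

theorem slice_eq_of_pow (he : IsConjugateCycle (p ^ k) e) (hc : c ^ p ^ k = c) :
    slice (p ^ k) e c = X ^ 2 * sliceLine e ^ p ^ k + X * sliceMid e c ^ p ^ k +
      (1 + X ^ p ^ k) * sliceLead e ^ p ^ k := by
  rw [sliceLead_pow he, sliceLine_pow he, sliceMid_pow he hc, slice, sliceLead, sliceMid, sliceLine]
  simp only [C_add]
  ring

theorem trace_omega_pow :
    trace ((ω : SliceOrder e c) ^ p ^ k) = -sliceMid e c ^ p ^ k := by
  rw [quadraticAlgebra_trace_pow_char_pow, trace_omega, neg_pow,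
    neg_one_pow_char_pow, neg_one_mul]

theorem norm_frobeniusLift (he : IsConjugateCycle (p ^ k) e) (hc : c ^ p ^ k = c) :
    QuadraticAlgebra.norm (frobeniusLift (p ^ k) e c) =
      sliceLine e ^ p ^ k * slice (p ^ k) e c := by
  have hnorm : QuadraticAlgebra.norm (ω ^ p ^ k : SliceOrder e c) =
      (1 + X ^ p ^ k) * sliceLine e ^ p ^ k * sliceLead e ^ p ^ k := by
    simp [map_pow, norm_def, mul_pow, add_pow_char_pow]
  rw [frobeniusLift, norm_sub_algebraMap, hnorm, trace_omega_pow, slice_eq_of_pow he hc]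
  ring

theorem trace_frobeniusLift_mul_star (t : K[X]) :
    trace (frobeniusLift (p ^ k) e c * star (algebraMap K[X] _ t - ω)) =
      -t * sliceMid e c ^ p ^ k - X * sliceLine e ^ p ^ k * (2 * t + sliceMid e c) -
        trace ((ω : SliceOrder e c) ^ p ^ k * star ω) := by
  rw [frobeniusLift, trace_sub_algebraMap_mul_star, trace_omega_pow]
  ring

theorem natDegree_trace_residual_le (he : IsConjugateCycle (p ^ k) e) (hc : c ^ p ^ k = c) :
    (-(sliceLead e * X ^ p ^ k) * sliceMid e c ^ p ^ k -
        X * sliceLine e ^ p ^ k * (2 * (sliceLead e * X ^ p ^ k) + sliceMid e c) +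
      (C (e 1) * X ^ p ^ k + C (e 0) * X) * slice (p ^ k) e c).natDegree ≤ 2 * p ^ k + 1 := by
  have hq := he.two_le Fact.out
  have hcancel : -(sliceLead e * X ^ p ^ k) * sliceMid e c ^ p ^ k -
        X * sliceLine e ^ p ^ k * (2 * (sliceLead e * X ^ p ^ k) + sliceMid e c) +
      (C (e 1) * X ^ p ^ k + C (e 0) * X) * slice (p ^ k) e c =
      (C (e 1 * (e 2 + e 3) - c * e 2) - C (e 0 * e 2) * X) * X ^ (2 * p ^ k) +
      (C (e 1) * (1 + X) * sliceLine e - sliceLead e * (C (e 3 + e 4) + C (2 * e 4) * X)) *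
        X ^ p ^ k + (C (e 0) * (1 + X) * sliceLine e - C (e 4) * sliceMid e c) * X := by
    rw [sliceLine_pow he, sliceMid_pow he hc, slice, sliceLead, sliceMid, sliceLine]
    simp only [C_add, C_sub, C_mul, map_ofNat]
    ring
  rw [hcancel, sliceLead, sliceLine, sliceMid]
  compute_degree
  lia

theorem exists_trace_eq_of_slice_smul_eq (he : IsConjugateCycle (p ^ k) e) (hc : c ^ p ^ k = c)
    {Φ : SliceOrder e c} (hΦ : slice (p ^ k) e c • Φ =
      frobeniusLift (p ^ k) e c * star (algebraMap K[X] _ (sliceLead e * X ^ p ^ k) - ω)) :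
    ∃ κ : K, trace Φ = C κ - C (e 0) * X - C (e 1) * X ^ p ^ k := by
  have hq := he.two_le Fact.out
  have hne : slice (p ^ k) e c ≠ 0 := ne_zero_of_natDegree_gt
    (n := 0) (by rw [natDegree_slice (he.ne_zero 1) hq]; lia)
  have htrace := congrArg trace hΦ
  rw [map_smul, smul_eq_mul, trace_frobeniusLift_mul_star] at htrace
  have hdegree : ((trace Φ + (C (e 1) * X ^ p ^ k + C (e 0) * X)) *
      slice (p ^ k) e c).natDegree ≤ 2 * p ^ k + 1 := by
    rw [add_mul, mul_comm (trace Φ), htrace, sub_add_eq_add_sub]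
    refine natDegree_sub_le_of_le (natDegree_trace_residual_le he hc) ?_ |>.trans (max_self _).le
    obtain ⟨m, hm⟩ := Nat.exists_eq_succ_of_ne_zero (show p ^ k ≠ 0 by lia)
    rw [hm]
    refine natDegree_trace_omega_pow_mul_star_omega_le one_le_two ?_ ?_ m
    · rw [sliceLine, sliceLead]
      compute_degree!
    · rw [sliceMid]
      compute_degree
  have hconst : (trace Φ + (C (e 1) * X ^ p ^ k + C (e 0) * X)).natDegree = 0 := by
    by_contra hpos
    rw [natDegree_mul (ne_zero_of_natDegree_gt (Nat.pos_of_ne_zero hpos)) hne,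
      natDegree_slice (he.ne_zero 1) hq] at hdegree
    lia
  obtain ⟨κ, hκ⟩ := natDegree_eq_zero.1 hconst
  exact ⟨κ, by linear_combination -hκ⟩

theorem exists_hasFrobeniusQuotientRelations (he : IsConjugateCycle (p ^ k) e)
    (hc : c ^ p ^ k = c) (h : slice (p ^ k) e c ∣ sliceCofactor (p ^ k) e) :
    ∃ (Φ : SliceOrder e c) (κ : K), HasFrobeniusQuotientRelations (p ^ k) Φ κ := by
  have hne : slice (p ^ k) e c ≠ 0 := ne_zero_of_natDegree_gt
    (n := 0) (by rw [natDegree_slice (he.ne_zero 1) (he.two_le Fact.out)]; lia)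
  obtain ⟨Φ, hΦ⟩ := exists_smul_eq_mul_star_of_dvd (slice_mul_sliceLead (p ^ k))
    (slice_dvd_frobeniusLift h)
  obtain ⟨κ, htrace⟩ := exists_trace_eq_of_slice_smul_eq he hc hΦ
  refine ⟨Φ, κ, htrace, ?_⟩
  have hnorm := congrArg QuadraticAlgebra.norm hΦ
  rw [map_mul, QuadraticAlgebra.norm_star, norm_frobeniusLift he hc, norm_algebraMap_sub_omega,
    ← slice_mul_sliceLead, Algebra.smul_def, map_mul, QuadraticAlgebra.norm_algebraMap] at hnorm
  rw [← sliceLine_pow he]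
  exact mul_left_cancel₀ (pow_ne_zero 2 hne) (by linear_combination hnorm)

end Frobenius

theorem linear_mul_sub_ne {q : ℕ} (he : IsConjugateCycle q e) (r s : K) :
    (C s * X + C r) * (sliceMid e c - (C s * X + C r)) ≠
      (1 + X) * sliceLine e * sliceLead e := by
  intro h
  have hcubic : (⟨s * e 0 - e 4 * e 1,
      r * e 0 + s * (c - s) - (e 3 * e 1 + e 4 * e 1 + e 4 * e 2),
      r * (c - s) + s * (e 2 + e 3 - r) - (e 3 * e 2 + e 3 * e 1 + e 4 * e 2),
      r * (e 2 + e 3 - r) - e 3 * e 2⟩ : Cubic K).toPoly = (⟨0, 0, 0, 0⟩ : Cubic K).toPoly := by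
    rw [sliceMid, sliceLine, sliceLead] at h
    simp only [Cubic.toPoly, C_add, C_sub, C_mul, C_0] at h ⊢
    linear_combination h
  simp only [Cubic.toPoly_injective, Cubic.mk.injEq] at hcubic
  obtain ⟨h3, h2, h1, h0⟩ := hcubic
  have hconst : r = e 2 ∨ r = e 3 := by
    have : (r - e 2) * (r - e 3) = 0 := by linear_combination -h0
    simpa only [mul_eq_zero, sub_eq_zero] using this
  have hroot : e 0 * r = e 4 * e 1 ∨ e 0 * r = e 1 * e 3 ∨ e 0 * r = e 2 * e 4 := by
    have hvanish : (s - r) * (e 3 * s - e 4 * r) * (e 2 * s - e 1 * r) = 0 := by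
      linear_combination r ^ 3 * h3 - r ^ 2 * s * h2 + r * s ^ 2 * h1 - s ^ 3 * h0
    have hscaled : (e 4 * e 1 - e 0 * r) * (e 3 * (e 4 * e 1) - e 4 * (e 0 * r)) *
        (e 2 * (e 4 * e 1) - e 1 * (e 0 * r)) = 0 := by
      rw [← sub_eq_zero.1 h3]
      linear_combination e 0 ^ 3 * hvanish
    have : e 4 * e 1 * ((e 0 * r - e 4 * e 1) * (e 0 * r - e 1 * e 3) *
        (e 0 * r - e 2 * e 4)) = 0 := by
      linear_combination -hscaled
    simpa only [mul_eq_zero, sub_eq_zero, he.ne_zero, false_or, or_assoc] using this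
  have hne {i j : Fin 5} (hij : i ≠ j) : e i * e (i + 2) ≠ e j * e (j + 2) :=
    he.mul_add_two.injective.ne hij
  rcases hconst with rfl | rfl
  · rcases hroot with hr | hr | hr
    · exact hne (show (0 : Fin 5) ≠ 4 by decide) hr
    · exact hne (show (0 : Fin 5) ≠ 1 by decide) hr
    · exact hne (show (0 : Fin 5) ≠ 2 by decide) hr
  · rw [mul_comm] at hroot
    rcases hroot with hr | hr | hr
    · exact hne (show (3 : Fin 5) ≠ 4 by decide) hr
    · exact hne (show (3 : Fin 5) ≠ 1 by decide) hr
    · exact hne (show (3 : Fin 5) ≠ 2 by decide) hr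

theorem mul_sub_ne {q : ℕ} (he : IsConjugateCycle q e) (y : K[X]) :
    y * (sliceMid e c - y) ≠ (1 + X) * sliceLine e * sliceLead e := by
  intro h
  have hlinear {z : K[X]} (hz : z.natDegree ≤ 1)
      (h : z * (sliceMid e c - z) = (1 + X) * sliceLine e * sliceLead e) : False := by
    obtain ⟨s, r, rfl⟩ := exists_eq_X_add_C_of_natDegree_le_one hz
    exact linear_mul_sub_ne he r s h
  have hcubic : ((1 + X) * sliceLine e * sliceLead e).natDegree = 3 := by
    rw [sliceLine, sliceLead]
    compute_degree!
    simp [he.ne_zero]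
  have hne : y * (sliceMid e c - y) ≠ 0 := ne_zero_of_natDegree_gt (n := 0) (by rw [h]; lia)
  have hdegree : y.natDegree + (sliceMid e c - y).natDegree = 3 := by
    rw [← natDegree_mul (left_ne_zero_of_mul hne) (right_ne_zero_of_mul hne), h, hcubic]
  rcases le_or_gt y.natDegree 1 with hy | hy
  · exact hlinear hy h
  · exact hlinear (z := sliceMid e c - y) (by lia) (by linear_combination h)

theorem sliceOrder_eq_zero_of_norm_eq_zero {q : ℕ} (he : IsConjugateCycle q e) {z : SliceOrder e c}
    (hz : QuadraticAlgebra.norm z = 0) : z = 0 := by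
  by_contra hne
  obtain ⟨y, hy⟩ := exists_root_of_norm_eq_zero hz hne
  exact mul_sub_ne he y (by linear_combination -hy)

namespace HasFrobeniusQuotientRelations

variable {q : ℕ} {Φ : SliceOrder e c} {κ : K}

theorem discrim_eq (hΦ : HasFrobeniusQuotientRelations q Φ κ) :
    (C κ - C (e 0) * X - C (e 1) * X ^ q) ^ 2 -
        4 * (sliceLead e * (C (e 0) * X ^ q + C (e 4))) =
      (sliceMid e c ^ 2 - 4 * ((1 + X) * sliceLine e * sliceLead e)) * Φ.im ^ 2 := by
  rw [← hΦ.trace_eq, ← hΦ.norm_eq, trace_sq_sub_four_mul_norm]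
  ring

theorem im_ne_zero_and_natDegree_im (hΦ : HasFrobeniusQuotientRelations q Φ κ) (hq : 2 ≤ q)
    (h0 : e 0 ≠ 0) (h1 : e 1 ≠ 0) : Φ.im ≠ 0 ∧ Φ.im.natDegree + 2 = q := by
  have htrace : (C κ - C (e 0) * X - C (e 1) * X ^ q).natDegree = q := by
    compute_degree
    · simp [h1, show q ≠ 0 by lia, show q ≠ 1 by lia]
    all_goals lia
  have hnorm : (4 * (sliceLead e * (C (e 0) * X ^ q + C (e 4)))).natDegree ≤ q + 1 := by
    rw [sliceLead]
    compute_degree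
    lia
  have hleft : ((C κ - C (e 0) * X - C (e 1) * X ^ q) ^ 2 -
        4 * (sliceLead e * (C (e 0) * X ^ q + C (e 4)))).natDegree = 2 * q := by
    rw [natDegree_sub_eq_left_of_natDegree_lt, natDegree_pow, htrace]
    rw [natDegree_pow, htrace]
    exact hnorm.trans_lt (by lia)
  have hdiscrim :
      (sliceMid e c ^ 2 - 4 * ((1 + X) * sliceLine e * sliceLead e)).natDegree = 4 := by
    rw [sliceMid, sliceLine, sliceLead]
    compute_degree!
  rw [hΦ.discrim_eq] at hleft
  have hne := ne_zero_of_natDegree_gt (n := 0) (by rw [hleft]; lia)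
  have him : Φ.im ≠ 0 := by
    rintro him
    simp [him] at hne
  rw [natDegree_mul (left_ne_zero_of_mul hne) (right_ne_zero_of_mul hne), hdiscrim,
    natDegree_pow] at hleft
  exact ⟨him, by lia⟩

theorem im_dvd_add_re (hΦ : HasFrobeniusQuotientRelations q Φ κ) (hq : (q : K) = 0) :
    Φ.im ∣ C (e 0) * Φ.re + C (e 1) * (C (e 0) * X ^ q + C (e 4)) := by
  convert im_dvd_derivative_norm_sub Φ using 1
  rw [hΦ.trace_eq, hΦ.norm_eq]
  simp only [sliceLead, derivative_mul, derivative_add, derivative_sub, derivative_C, derivative_X,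
    derivative_X_pow, hq, map_zero, zero_mul, mul_zero, zero_add, add_zero, mul_one]
  ring

theorem norm_smul_add (hΦ : HasFrobeniusQuotientRelations q Φ κ) :
    QuadraticAlgebra.norm
        (C (e 0) • Φ + algebraMap K[X] _ (C (e 1) * (C (e 0) * X ^ q + C (e 4)))) =
      (C (e 0) * X ^ q + C (e 4)) * C (e 0 * e 1 * κ + e 0 ^ 2 * e 2 + e 1 ^ 2 * e 4) := by
  rw [norm_smul_add_algebraMap, hΦ.trace_eq, hΦ.norm_eq, sliceLead]
  simp only [C_add, C_mul, C_pow]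
  ring

theorem const_ne_zero (hΦ : HasFrobeniusQuotientRelations q Φ κ) (he : IsConjugateCycle q e)
    (him : Φ.im ≠ 0) : e 0 * e 1 * κ + e 0 ^ 2 * e 2 + e 1 ^ 2 * e 4 ≠ 0 := by
  intro hu
  have hnorm := hΦ.norm_smul_add
  rw [hu, C_0, mul_zero] at hnorm
  have hzero := congrArg QuadraticAlgebra.im (sliceOrder_eq_zero_of_norm_eq_zero he hnorm)
  rw [im_add, im_smul, algebraMap_im, add_zero,
    smul_eq_mul, im_zero, mul_eq_zero, C_eq_zero] at hzero
  exact hzero.elim (he.ne_zero 0) him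

theorem im_dvd_line (hΦ : HasFrobeniusQuotientRelations q Φ κ) (hq : (q : K) = 0)
    (he : IsConjugateCycle q e) (him : Φ.im ≠ 0) : Φ.im ∣ C (e 0) * X ^ q + C (e 4) := by
  have hunit : IsUnit (C (e 0 * e 1 * κ + e 0 ^ 2 * e 2 + e 1 ^ 2 * e 4)) :=
    isUnit_C.2 (hΦ.const_ne_zero he him).isUnit
  rw [← hunit.dvd_mul_right, ← hΦ.norm_smul_add]
  refine dvd_norm_of_dvd ?_ ?_
  · rw [re_add, re_smul, algebraMap_re]
    exact hΦ.im_dvd_add_re hq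
  · rw [im_add, im_smul, algebraMap_im, add_zero]
    exact dvd_mul_left _ _

theorem natDegree_im_le_one (hΦ : HasFrobeniusQuotientRelations q Φ κ) (hq : (q : K) = 0)
    (he : IsConjugateCycle q e) (him : Φ.im ≠ 0) : Φ.im.natDegree ≤ 1 := by
  have hline := hΦ.im_dvd_line hq he him
  have htrace : C (e 0) * trace Φ + C (e 1) * (C (e 0) * X ^ q + C (e 4)) =
      C (-e 0 ^ 2) * X + C (e 0 * κ + e 1 * e 4) := by
    rw [hΦ.trace_eq]
    simp only [C_add, C_mul, C_pow, C_neg]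
    ring
  have hdvd : Φ.im ∣ C (-e 0 ^ 2) * X + C (e 0 * κ + e 1 * e 4) := by
    rw [← htrace, trace_def]
    convert dvd_add ((hΦ.im_dvd_add_re hq).mul_left 2) ((hline.mul_left (-C (e 1))).add
      (dvd_mul_left Φ.im (C (e 0) * -sliceMid e c))) using 1
    ring
  have hlead : -e 0 ^ 2 ≠ 0 := neg_ne_zero.2 (pow_ne_zero 2 (he.ne_zero 0))
  exact (natDegree_le_of_dvd hdvd (ne_zero_of_natDegree_gt (natDegree_linear hlead).ge)).trans_eq
    (natDegree_linear hlead)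

theorem le_three (hΦ : HasFrobeniusQuotientRelations q Φ κ) (hq : (q : K) = 0) (hq2 : 2 ≤ q)
    (he : IsConjugateCycle q e) : q ≤ 3 := by
  obtain ⟨him, hdegree⟩ := hΦ.im_ne_zero_and_natDegree_im hq2 (he.ne_zero 0) (he.ne_zero 1)
  have := hΦ.natDegree_im_le_one hq he him
  lia

theorem associated_im_sliceLine {Φ : SliceOrder e c} (hΦ : HasFrobeniusQuotientRelations 3 Φ κ)
    [CharP K 3] (he : IsConjugateCycle 3 e) : Associated Φ.im (sliceLine e) := by
  obtain ⟨him, hdegree⟩ := hΦ.im_ne_zero_and_natDegree_im (by lia) (he.ne_zero 0) (he.ne_zero 1)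
  have hline : C (e 0) * X ^ 3 + C (e 4) = sliceLine e ^ 3 := by
    have : Fact (Nat.Prime 3) := ⟨Nat.prime_three⟩
    exact (pow_one 3 ▸ sliceLine_pow (p := 3) (k := 1) he).symm
  have hdvd := hΦ.im_dvd_line (CharP.cast_eq_zero K 3) he him
  rw [hline] at hdvd
  have hprime : Prime Φ.im := (irreducible_of_degree_eq_one
    (degree_eq_iff_natDegree_eq him |>.2 (show _ = 1 by lia))).prime
  refine associated_of_dvd_of_natDegree_le (hprime.dvd_of_dvd_pow hdvd) ?_ ?_
  · exact ne_zero_of_natDegree_gt (natDegree_linear (he.ne_zero 4)).ge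
  · exact natDegree_linear_le.trans (by lia)

theorem relation_of_eq_three {Φ : SliceOrder e c} (hΦ : HasFrobeniusQuotientRelations 3 Φ κ)
    [CharP K 3] (he : IsConjugateCycle 3 e) :
    e 0 ^ 2 * e 3 + c * e 0 * e 4 + e 1 * e 4 ^ 2 = 0 := by
  obtain ⟨w, hw⟩ := (hΦ.associated_im_sliceLine he).symm
  obtain ⟨w, hw0, hwC⟩ := isUnit_iff.1 w.isUnit
  rw [← hwC] at hw
  have hdiscrim := hΦ.discrim_eq
  rw [← hw, sliceLine, sliceMid, sliceLead] at hdiscrim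
  set r : K[X] := (C κ - C (e 0) * X) ^ 2 - 2 * (C κ - C (e 0) * X) * C (e 1) * X ^ 3 -
    4 * ((C (e 1) * X + C (e 2)) * (C (e 0) * X ^ 3 + C (e 4))) -
    C (w ^ 2) * (C (e 0 ^ 2 * e 3 ^ 2) * X ^ 4 +
      C (2 * e 0 * c - 4 * e 1 * e 4) * X ^ 3 * (C (2 * e 3 * e 4) * X + C (e 3 ^ 2)) +
      (C (c ^ 2 + 2 * e 0 * (e 2 + e 3) - 4 * (e 4 * e 2 + e 4 * e 1 + e 3 * e 1)) * X ^ 2 +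
        C (2 * c * (e 2 + e 3) - 4 * (e 4 * e 2 + e 3 * e 2 + e 3 * e 1)) * X +
        C ((e 2 + e 3) ^ 2 - 4 * (e 3 * e 2))) * (C (e 4) * X + C (e 3)) ^ 2) with hr
  have hr4 : r.natDegree ≤ 4 := by
    rw [hr]
    compute_degree
  have htop : C (w ^ 2 * e 0 ^ 2 * e 4 ^ 2 - e 1 ^ 2) * X ^ 6 +
      C (2 * w ^ 2 * e 4 * (e 0 ^ 2 * e 3 + c * e 0 * e 4 - 2 * e 1 * e 4 ^ 2)) * X ^ 5 = r := by
    rw [hr]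
    simp only [C_add, C_sub, C_mul, C_pow, map_ofNat] at hdiscrim ⊢
    linear_combination -hdiscrim
  have hcoeff := congrArg (coeff · 5) htop
  simp only [coeff_add, coeff_C_mul, coeff_X_pow, coeff_eq_zero_of_natDegree_lt
    (hr4.trans_lt (by lia : 4 < 5)), Nat.reduceEqDiff, ↓reduceIte, mul_zero, mul_one, zero_add,
    mul_eq_zero, pow_eq_zero_iff two_ne_zero, hw0.ne_zero, he.ne_zero, or_false] at hcoeff
  have h3 : (3 : K) = 0 := CharP.ofNat_eq_zero K 3
  have h2 : (2 : K) ≠ 0 := fun h2 ↦ one_ne_zero (by linear_combination h3 - h2)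
  linear_combination hcoeff.resolve_left h2 + e 1 * e 4 ^ 2 * h3

theorem pow_three_ne {Φ : SliceOrder e c} (hΦ : HasFrobeniusQuotientRelations 3 Φ κ) [CharP K 3]
    (he : IsConjugateCycle 3 e) : c ^ 3 ≠ c := by
  intro hc
  have : Fact (Nat.Prime 3) := ⟨Nat.prime_three⟩
  have hrelation := hΦ.relation_of_eq_three he
  have hpow := congrArg (· ^ 3) hrelation
  simp only [add_pow_char, mul_pow, pow_right_comm _ 2 3, he.pow_eq, hc, zero_pow three_ne_zero,
    Fin.reduceAdd] at hpow
  have : e 1 * e 3 = e 2 * e 4 := mul_left_cancel₀ (pow_ne_zero 2 (he.ne_zero 0)) (by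
    linear_combination e 1 * hrelation - e 4 * hpow)
  exact absurd (he.mul_add_two.injective this) (by decide)

end HasFrobeniusQuotientRelations

theorem sliceCofactor_two [CharP K 2] (he : IsConjugateCycle 2 e) : sliceCofactor 2 e =
    C (e 2) * X ^ 6 + C (e 3) * X ^ 4 - C (e 0) * X ^ 3 - C (e 4) * X := by
  have : Fact (Nat.Prime 2) := ⟨Nat.prime_two⟩
  have hlead := sliceLead_pow (p := 2) (k := 1) he
  have hline := sliceLine_pow (p := 2) (k := 1) he
  rw [pow_one] at hlead hline
  rw [sliceCofactor, hlead, hline]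
  ring

theorem not_slice_two_dvd_sliceCofactor [CharP K 2] (he : IsConjugateCycle 2 e) :
    ¬slice 2 e c ∣ sliceCofactor 2 e := by
  have hcofactor := sliceCofactor_two he
  rintro ⟨w, hw⟩
  have hne : sliceCofactor 2 e ≠ 0 := by
    intro h0
    have := congrArg (coeff · 6) (hcofactor.symm.trans h0)
    simp [coeff_X_pow, he.ne_zero] at this
  have hw1 : w.natDegree ≤ 1 := by
    have hdegree : (sliceCofactor 2 e).natDegree ≤ 6 := by
      rw [hcofactor]
      compute_degree
    rw [hw] at hne
    rw [hw, natDegree_mul (left_ne_zero_of_mul hne) (right_ne_zero_of_mul hne),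
      natDegree_slice (he.ne_zero 1) le_rfl] at hdegree
    lia
  obtain ⟨w1, w0, rfl⟩ := exists_eq_X_add_C_of_natDegree_le_one hw1
  have hproduct : slice 2 e c * (C w1 * X + C w0) =
      C (e 1 * w1) * X ^ 6 + C (e 1 * w0 + (e 0 + e 2) * w1) * X ^ 5 +
      C ((e 0 + e 2) * w0 + c * w1) * X ^ 4 + C (c * w0 + (e 2 + e 3 + e 4) * w1) * X ^ 3 +
      C ((e 2 + e 3 + e 4) * w0 + (e 3 + e 4) * w1) * X ^ 2 +
      C ((e 3 + e 4) * w0 + e 3 * w1) * X + C (e 3 * w0) := by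
    rw [slice, sliceLead, sliceMid, sliceLine]
    simp only [C_add, C_mul]
    ring
  have hcoeff (n : ℕ) := congrArg (coeff · n) (hproduct.symm.trans (hw.symm.trans hcofactor))
  simp only [coeff_add, coeff_sub, coeff_C_mul, coeff_X_pow, coeff_X, coeff_C] at hcoeff
  have h0 : w0 = 0 := by simpa [he.ne_zero] using hcoeff 0
  have h5 : e 1 * w0 + (e 0 + e 2) * w1 = 0 := by simpa using hcoeff 5
  have h6 : e 1 * w1 = e 2 := by simpa using hcoeff 6
  have hw1 : w1 ≠ 0 := right_ne_zero_of_mul (h6 ▸ he.ne_zero 2)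
  have h20 : e 0 = e 2 := mul_right_cancel₀ hw1 (by
    linear_combination h5 - e 1 * h0 - e 2 * w1 * CharP.ofNat_eq_zero K 2)
  exact absurd (he.injective h20) (by decide)

theorem not_slice_dvd_sliceCofactor {p k : ℕ} [Fact p.Prime] [CharP K p]
    (he : IsConjugateCycle (p ^ k) e) (hc : c ^ p ^ k = c) :
    ¬slice (p ^ k) e c ∣ sliceCofactor (p ^ k) e := by
  intro h
  have hp : p.Prime := Fact.out
  have hq := he.two_le hp
  have hcast : ((p ^ k : ℕ) : K) = 0 := by
    rw [Nat.cast_pow, CharP.cast_eq_zero, zero_pow]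
    rintro rfl
    simp at hq
  obtain ⟨Φ, κ, hΦ⟩ := exists_hasFrobeniusQuotientRelations he hc h
  have hq3 := hΦ.le_three hcast hq he
  obtain hq2 | hq3 : p ^ k = 2 ∨ p ^ k = 3 := by lia
  · obtain ⟨rfl, rfl⟩ := (Nat.prime_two.pow_eq_iff).1 hq2
    exact not_slice_two_dvd_sliceCofactor he h
  · obtain ⟨rfl, rfl⟩ := (Nat.prime_three.pow_eq_iff).1 hq3
    exact hΦ.pow_three_ne he hc

end Slice

theorem exists_map_eq_of_pow_card_eq {K L : Type*} [Field K] [Finite K] [Field L] (ι : K →+* L)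
    {a : L} (ha : a ^ Nat.card K = a) : ∃ x, ι x = a := by
  have := Fintype.ofFinite K
  have hsplits := splits_X_pow_nat_card_sub_X (K := K)
  rw [Nat.card_eq_fintype_card] at ha hsplits
  exact hsplits.mem_range_of_isRoot (FiniteField.X_pow_card_sub_X_ne_zero K Fintype.one_lt_card)
    (by simp [ha])

theorem mem_of_pow_card_eq {K : Type*} [Field K] {F : Subfield K} [Finite F] {a : K}
    (ha : a ^ Nat.card F = a) : a ∈ F := by
  obtain ⟨x, rfl⟩ := exists_map_eq_of_pow_card_eq F.subtype ha
  exact x.2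

theorem pow_pow_eq_self_of_card_eq {K : Type*} [Field K] [Finite K] {q n : ℕ}
    (hK : Nat.card K = q ^ n) (z : K) : z ^ q ^ n = z := by
  have := Fintype.ofFinite K
  rw [← hK, Nat.card_eq_fintype_card, FiniteField.pow_card]

section Pentagon

/-- The pentagon recurrence: each entry times the next but one equals one plus the entry between
them. -/
def IsPentagon {R : Type*} [CommRing R] (x : Fin 5 → R) : Prop :=
  ∀ i, x i * x (i + 2) = 1 + x (i + 1)

/-- The entries `z, z ^ q, …, z ^ q ^ 4`, which the `q`-th power map permutes cyclically when
`z ^ q ^ 5 = z`. -/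
def frobeniusOrbit {K : Type*} [Monoid K] (q : ℕ) (z : K) (i : Fin 5) : K := z ^ q ^ (i : ℕ)

theorem frobeniusOrbit_zero {K : Type*} [Monoid K] (q : ℕ) (z : K) : frobeniusOrbit q z 0 = z := by
  simp [frobeniusOrbit]

theorem frobeniusOrbit_pow {K : Type*} [Monoid K] {q : ℕ} {z : K} (hz : z ^ q ^ 5 = z) (i : Fin 5) :
    frobeniusOrbit q z i ^ q = frobeniusOrbit q z (i + 1) := by
  rw [frobeniusOrbit, ← pow_mul, ← pow_succ, frobeniusOrbit]
  obtain rfl | hi := eq_or_ne i (Fin.last 4)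
  · simpa using hz
  · rw [Fin.val_add_one_of_lt (Fin.lt_last_iff_ne_last.2 hi)]

theorem pow_pow_five_eq_self_of_mul_pow_pow_eq {R : Type*} [CommRing R] [IsDomain R] {p k : ℕ}
    [Fact p.Prime] [CharP R p] {a : R} (ha : a * (a ^ p ^ k) ^ p ^ k = 1 + a ^ p ^ k) :
    a ^ (p ^ k) ^ 5 = a := by
  have hne : a ≠ 0 := by
    rintro rfl
    simp [(Fact.out : p.Prime).ne_zero] at ha
  have h (n : ℕ) : a ^ (p ^ k) ^ n * a ^ (p ^ k) ^ (n + 2) = 1 + a ^ (p ^ k) ^ (n + 1) := by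
    induction n with
    | zero => simpa only [zero_add, pow_zero, pow_one, sq, pow_mul] using ha
    | succ n ih =>
      simpa only [mul_pow, add_pow_char_pow, one_pow, ← pow_mul a, ← pow_succ (p ^ k),
        add_right_comm _ 1] using congrArg (· ^ p ^ k) ih
  have hne' (n : ℕ) : a ^ (p ^ k) ^ n ≠ 0 := pow_ne_zero _ hne
  have h14 : a ^ (p ^ k) ^ 1 * a ^ (p ^ k) ^ 4 = 1 + a ^ (p ^ k) ^ 0 :=
    mul_left_cancel₀ (hne' 2) (by linear_combination a ^ (p ^ k) ^ 1 * h 2 + h 1 - h 0)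
  rw [← pow_one a, ← pow_zero (p ^ k), ← pow_mul]
  refine mul_left_cancel₀ (mul_ne_zero (hne' 3) (hne' 1)) ?_
  rw [pow_mul]
  linear_combination a ^ (p ^ k) ^ 1 * h 3 + h14 - h 0 - a ^ (p ^ k) ^ 0 * h 1

namespace IsPentagon

variable {R : Type*} [CommRing R] {x : Fin 5 → R}

theorem mul_add_three (hx : IsPentagon x) (i : Fin 5) : x i * x (i + 3) = 1 + x (i + 4) := by
  simpa [add_assoc, mul_comm] using hx (i + 3)

theorem of_pow {p k : ℕ} [Fact p.Prime] [CharP R p] (hpow : ∀ i, x i ^ p ^ k = x (i + 1))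
    (h : x 0 * x 2 = 1 + x 1) : IsPentagon x := by
  intro i
  induction i using Fin.induction with
  | zero => exact h
  | succ i ih =>
    rw [← Fin.coeSucc_eq_succ, add_right_comm, add_right_comm _ 1 1, ← hpow, ← hpow, ← hpow,
      ← mul_pow, ih, add_pow_char_pow, one_pow]

theorem ne_zero [Nontrivial R] {q : ℕ} (hq : q ≠ 0) (hx : IsPentagon x)
    (hpow : ∀ i, x i ^ q = x (i + 1)) (i : Fin 5) : x i ≠ 0 := by
  intro hi
  have := hx i
  rw [← hpow i, hi] at this
  simp [hq] at this

theorem eval_slice {K : Type*} [Field K] {x : Fin 5 → K} (hx : IsPentagon x) {q : ℕ}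
    (hpow : x 0 ^ q = x 1) (e : Fin 5 → K) (c : K) :
    (slice q e c).eval (x 0) = x 0 * x 1 * (c + ∑ i, e i * x i) := by
  have h02 := hx 0
  have h13 := hx 1
  have h14 := hx.mul_add_three 1
  simp only [Fin.reduceAdd, zero_add] at h02 h13 h14
  simp only [slice, sliceLead, sliceMid, sliceLine, eval_add, eval_mul, eval_pow, eval_C, eval_X,
    eval_one, hpow, Fin.sum_univ_five]
  linear_combination -(x 1 * e 2 * h02 + e 3 * x 0 * h13 + e 3 * h02 + e 4 * x 0 * h14)

end IsPentagon

variable {K : Type*} [Field K] {p k : ℕ} [Fact p.Prime] [CharP K p] {e : Fin 5 → K} {c : K}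

theorem pentagon_relation_mul_sliceCofactor (he : IsConjugateCycle (p ^ k) e)
    (hc : c ^ p ^ k = c) :
    (X * (X ^ p ^ k) ^ p ^ k - X ^ p ^ k - 1) * sliceCofactor (p ^ k) e =
      X * slice (p ^ k) e c ^ p ^ k - slice (p ^ k) e c * (X ^ p ^ k) ^ p ^ k := by
  have hpow : slice (p ^ k) e c ^ p ^ k = sliceLead e ^ p ^ k * ((X ^ p ^ k) ^ p ^ k) ^ 2 +
      sliceMid e c ^ p ^ k * (X ^ p ^ k) ^ p ^ k + (1 + X ^ p ^ k) * sliceLine e ^ p ^ k := by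
    simp only [slice, add_pow_char_pow, mul_pow, one_pow, pow_right_comm _ 2]
  rw [hpow, slice_eq_of_pow he hc, sliceCofactor]
  ring

theorem exists_isPentagon_sum_eq_zero (hK : Nat.card K = (p ^ k) ^ 5)
    (he : IsConjugateCycle (p ^ k) e) (hc : c ^ p ^ k = c) :
    ∃ x : Fin 5 → K, IsPentagon x ∧ (∀ i, x i ^ p ^ k = x (i + 1)) ∧ c + ∑ i, e i * x i = 0 := by
  have hq : p ^ k ≠ 0 := pow_ne_zero _ (Fact.out : p.Prime).ne_zero
  have : Finite K := Nat.finite_of_card_ne_zero (hK ▸ pow_ne_zero 5 hq)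
  have hcoprime : ¬IsCoprime (slice (p ^ k) e c) (X * (X ^ p ^ k) ^ p ^ k - X ^ p ^ k - 1) := by
    refine fun h ↦ not_slice_dvd_sliceCofactor he hc (h.dvd_of_dvd_mul_left ?_)
    rw [pentagon_relation_mul_sliceCofactor he hc]
    exact dvd_sub ((dvd_pow_self _ hq).mul_left _) (dvd_mul_right _ _)
  rw [isCoprime_iff_aeval_ne_zero_of_isAlgClosed K (AlgebraicClosure K)] at hcoprime
  push Not at hcoprime
  obtain ⟨a, hslice, hrel⟩ := hcoprime
  have : CharP (AlgebraicClosure K) p :=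
    charP_of_injective_algebraMap (algebraMap K _).injective p
  obtain ⟨z, rfl⟩ := exists_map_eq_of_pow_card_eq (algebraMap K (AlgebraicClosure K)) (a := a) (by
    rw [hK]
    refine pow_pow_five_eq_self_of_mul_pow_pow_eq ?_
    simp only [map_sub, map_mul, map_pow, aeval_X, map_one] at hrel
    linear_combination hrel)
  rw [aeval_algebraMap_eq_zero_iff, coe_aeval_eq_eval] at hslice hrel
  have hpow := frobeniusOrbit_pow (pow_pow_eq_self_of_card_eq hK z)
  have hx : IsPentagon (frobeniusOrbit (p ^ k) z) := .of_pow hpow (by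
    simpa [frobeniusOrbit, sub_sub, sub_eq_zero, ← pow_mul, ← sq, add_comm] using hrel)
  have hmul : frobeniusOrbit (p ^ k) z 0 * frobeniusOrbit (p ^ k) z 1 *
      (c + ∑ i, e i * frobeniusOrbit (p ^ k) z i) = 0 := by
    rw [← hx.eval_slice (hpow 0)]
    simpa [frobeniusOrbit] using hslice
  exact ⟨_, hx, hpow, (mul_eq_zero.1 hmul).resolve_left
    (mul_ne_zero (hx.ne_zero hq hpow 0) (hx.ne_zero hq hpow 1))⟩

end Pentagon

section StarPentagon

/-- The recurrence satisfied by `-x / (1 + x)` for a pentagon `x`: the product of two adjacent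
entries is one plus the opposite entry. -/
def IsStarPentagon {R : Type*} [CommRing R] (y : Fin 5 → R) : Prop :=
  ∀ i, y i * y (i + 1) = 1 + y (i + 3)

theorem prod_univ_five_shift {M : Type*} [CommMonoid M] (f : Fin 5 → M) (i : Fin 5) :
    ∏ j, f j = f i * f (i + 1) * f (i + 2) * f (i + 3) * f (i + 4) := by
  rw [← Equiv.prod_comp (Equiv.addLeft i), Fin.prod_univ_five]
  simp

theorem prod_pow_eq_self {M : Type*} [CommMonoid M] {q : ℕ} {x : Fin 5 → M}
    (hx : ∀ i, x i ^ q = x (i + 1)) : (∏ i, x i) ^ q = ∏ i, x i := by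
  rw [← Finset.prod_pow, Finset.prod_congr rfl fun i _ ↦ hx i]
  exact Equiv.prod_comp (Equiv.addRight 1) x

theorem sum_pow_char_pow_eq_self {R : Type*} [CommRing R] {p k : ℕ} [Fact p.Prime] [CharP R p]
    {x : Fin 5 → R} (hx : ∀ i, x i ^ p ^ k = x (i + 1)) : (∑ i, x i) ^ p ^ k = ∑ i, x i := by
  rw [sum_pow_char_pow, Finset.sum_congr rfl fun i _ ↦ hx i]
  exact Equiv.sum_comp (Equiv.addRight 1) x

namespace IsPentagon

theorem mul_add_four {R : Type*} [CommRing R] {x : Fin 5 → R} (hx : IsPentagon x) (i : Fin 5) :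
    x (i + 1) * x (i + 4) = 1 + x i := by
  simpa [add_assoc] using hx.mul_add_three (i + 1)

theorem prod_eq {R : Type*} [CommRing R] {x : Fin 5 → R} (hx : IsPentagon x) :
    ∏ i, x i = 3 + ∑ i, x i := by
  have h02 := hx 0
  have h13 := hx 1
  have h24 := hx 2
  have h14 := hx.mul_add_four 0
  simp only [Fin.reduceAdd, zero_add] at h02 h13 h24 h14
  rw [Fin.prod_univ_five, Fin.sum_univ_five]
  linear_combination x 1 * x 3 * x 4 * h02 + x 4 * (1 + x 1) * h13 + h14 * (1 + x 2) + h24 + h02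

variable {K : Type*} [Field K] {x : Fin 5 → K}

theorem isStarPentagon_neg_div (hx : IsPentagon x) (hne : ∀ i, x i ≠ 0) :
    IsStarPentagon fun i ↦ -x i / (1 + x i) := by
  intro i
  have h1 := hx.mul_add_four (i + 1)
  have h3 := hx.mul_add_four (i + 3)
  have h24 := hx (i + 2)
  simp only [add_assoc, Fin.reduceAdd, add_zero] at h1 h3 h24
  have hi := hne i
  have hi1 := hne (i + 1)
  have hi2 := hne (i + 2)
  have hi4 := hne (i + 4)
  simp only [← hx.mul_add_four i, ← h1, ← h3]
  field_simp
  linear_combination -h24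

theorem prod_mul_neg_div (hx : IsPentagon x) (hne : ∀ i, x i ≠ 0) (i : Fin 5) :
    (∏ j, x j) * (-x i / (1 + x i)) = -(2 + x i + x (i + 1) + x (i + 4)) := by
  have hi1 := hne (i + 1)
  have hi4 := hne (i + 4)
  rw [prod_univ_five_shift x i, ← hx.mul_add_four]
  field_simp
  linear_combination -(hx i * x i * x (i + 3) + (1 + x (i + 1)) * hx.mul_add_three i +
    hx.mul_add_four i)

end IsPentagon

variable {K : Type*} [Field K] {p k : ℕ} [Fact p.Prime] [CharP K p] {e : Fin 5 → K} {c : K}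

theorem exists_isStarPentagon_sum_eq_zero (hK : Nat.card K = (p ^ k) ^ 5)
    (he : IsConjugateCycle (p ^ k) e) (hc : c ^ p ^ k = c) :
    ∃ y : Fin 5 → K, IsStarPentagon y ∧ (∀ i, y i ^ p ^ k = y (i + 1)) ∧
      c + ∑ i, e i * y i = 0 := by
  have hcycle : IsConjugateCycle (p ^ k) fun i ↦ c - (e i + e (i + 1) + e (i + 4)) := by
    refine .of_ne (fun i ↦ ?_) fun h ↦ ?_
    · simp only [sub_pow_char_pow, add_pow_char_pow, he.pow_eq, hc, add_right_comm i _ 1]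
    · have : e 4 = e 2 := by
        simp only [Fin.reduceAdd, zero_add] at h
        linear_combination -h
      exact absurd (he.injective this) (by decide)
  have hconst : (3 * c - 2 * ∑ i, e i) ^ p ^ k = 3 * c - 2 * ∑ i, e i := by
    rw [sub_pow_char_pow, mul_pow, mul_pow, hc, sum_pow_char_pow_eq_self he.pow_eq,
      ← iterateFrobenius_def, map_ofNat, ← iterateFrobenius_def, map_ofNat]
  obtain ⟨x, hx, hpow, hsum⟩ := exists_isPentagon_sum_eq_zero hK hcycle hconst
  have hne := hx.ne_zero (pow_ne_zero _ (Fact.out : p.Prime).ne_zero) hpow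
  refine ⟨_, hx.isStarPentagon_neg_div hne, fun i ↦ ?_, ?_⟩
  · rw [div_pow, add_pow_char_pow, one_pow, neg_pow, neg_one_pow_char_pow, neg_one_mul, hpow]
  · refine mul_left_cancel₀ (Finset.prod_ne_zero_iff.2 fun i (_ : i ∈ Finset.univ) ↦ hne i) ?_
    simp only [mul_add, Finset.mul_sum, mul_left_comm _ (e _), hx.prod_mul_neg_div hne]
    rw [hx.prod_eq]
    simp only [Fin.sum_univ_five, Fin.reduceAdd, zero_add] at hsum ⊢
    linear_combination hsum

end StarPentagon

section DicksonMatrix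

theorem exists_ne_zero_map_eq_zero_of_det_eq_zero {K ι : Type*} [Field K] [Finite K] [Fintype ι]
    [DecidableEq ι] {χ : ι → K →* K} (hχ : Function.Injective χ) {f : K →+ K} {M : Matrix ι ι K}
    (hM : ∀ i z, χ i (f z) = ∑ j, M i j * χ j z) (hdet : M.det = 0) : ∃ z, z ≠ 0 ∧ f z = 0 := by
  by_contra! hf
  have hsurj : Function.Surjective f := Finite.surjective_of_injective
    ((injective_iff_map_eq_zero f).2 fun z hz ↦ by_contra fun hne ↦ hf z hne hz)
  obtain ⟨l, hl, hlM⟩ := Matrix.exists_vecMul_eq_zero_iff.2 hdet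
  refine hl (funext (Fintype.linearIndependent_iff.1
    ((linearIndependent_monoidHom K K).comp χ hχ) l (funext fun w ↦ ?_)))
  obtain ⟨z, rfl⟩ := hsurj w
  calc (∑ i, l i • ⇑(χ i)) (f z) = ∑ j, Matrix.vecMul l M j * χ j z := by
        simp only [Finset.sum_apply, Pi.smul_apply, smul_eq_mul, hM, Matrix.vecMul, dotProduct,
          Finset.mul_sum, Finset.sum_mul, mul_assoc]
        exact Finset.sum_comm
    _ = 0 := by simp [hlM]

/-- The matrix expressing the conjugates of `z ^ q ^ 2 + b 0 * z ^ q + a 0 * z` through those of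
`z`, where `a` and `b` list the conjugates of the two coefficients. -/
def dicksonMatrix {R : Type*} [CommRing R] (a b : Fin 5 → R) : Matrix (Fin 5) (Fin 5) R :=
  .of fun i j ↦ (if j = i then a i else 0) + (if j = i + 1 then b i else 0) +
    if j = i + 2 then 1 else 0

theorem det_dicksonMatrix {R : Type*} [CommRing R] (a b : Fin 5 → R) :
    (dicksonMatrix a b).det = 1 + ∏ i, a i + ∏ i, b i -
      ∑ i, a i * (b (i + 1) * b (i + 2) * b (i + 3)) + ∑ i, b i * (a (i + 2) * a (i + 4)) := by
  have hM : dicksonMatrix a b = !![a 0, b 0, 1, 0, 0; 0, a 1, b 1, 1, 0; 0, 0, a 2, b 2, 1;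
      1, 0, 0, a 3, b 3; b 4, 1, 0, 0, a 4] := by
    ext i j
    fin_cases i <;> fin_cases j <;> simp [dicksonMatrix]
  rw [hM]
  simp [Matrix.det_succ_row_zero, Fin.sum_univ_succ, Fin.succAbove, Fin.prod_univ_five]
  ring

namespace IsStarPentagon

variable {R : Type*} [CommRing R] {y : Fin 5 → R}

theorem mul_mul (hy : IsStarPentagon y) (i : Fin 5) :
    y i * y (i + 1) * y (i + 2) = 1 + y i + y (i + 2) := by
  have h23 := hy (i + 2)
  simp only [add_assoc, Fin.reduceAdd, add_zero] at h23
  linear_combination y (i + 2) * hy i + h23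

theorem prod_eq (hy : IsStarPentagon y) : ∏ i, y i = 3 + ∑ i, y i := by
  have h01 := hy 0
  have h12 := hy 1
  have h40 := hy 4
  have h234 := hy.mul_mul 2
  simp only [Fin.reduceAdd, zero_add] at h01 h12 h40 h234
  rw [Fin.prod_univ_five, Fin.sum_univ_five]
  linear_combination y 0 * y 1 * h234 + h01 + (1 + y 0) * h12 + (1 + y 1) * h40

theorem det_dicksonMatrix (hy : IsStarPentagon y) (d β : Fin 5 → R) :
    (dicksonMatrix (fun i ↦ d i * β i * β (i + 4)) fun i ↦ β i * y i).det =
      1 + (∏ i, d i) * (∏ i, β i) ^ 2 +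
        (∏ i, β i) * (3 - ∑ i, d i + ∑ i, (1 - d (i + 2)) * (1 - d (i + 4)) * y i) := by
  have hmul := hy.mul_mul
  have hprod := hy.prod_eq
  rw [_root_.det_dicksonMatrix]
  simp only [Fin.prod_univ_five, Fin.sum_univ_five, Fin.reduceAdd, zero_add] at hprod ⊢
  have h0 := hmul 0
  have h1 := hmul 1
  have h2 := hmul 2
  have h3 := hmul 3
  have h4 := hmul 4
  simp only [Fin.reduceAdd, zero_add] at h0 h1 h2 h3 h4
  linear_combination β 0 * β 1 * β 2 * β 3 * β 4 *
    (hprod - d 0 * h1 - d 1 * h2 - d 2 * h3 - d 3 * h4 - d 4 * h0)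

end IsStarPentagon

/-- The additive map `z ↦ z ^ q ^ 2 + b * z ^ q + a * z` for `q = p ^ k`. -/
def frobeniusTrinomial {K : Type*} [Field K] (p k : ℕ) [ExpChar K p] (a b : K) : K →+ K :=
  AddMonoidHom.mk' (fun z ↦ z ^ (p ^ k) ^ 2 + b * z ^ p ^ k + a * z) fun z w ↦ by
    simp only [← pow_mul, add_pow_expChar_pow]
    ring

theorem frobeniusOrbit_apply_zero {M : Type*} [Monoid M] {q : ℕ} {x : Fin 5 → M}
    (hx : ∀ i, x i ^ q = x (i + 1)) : frobeniusOrbit q (x 0) = x := by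
  funext i
  induction i using Fin.induction with
  | zero => simp [frobeniusOrbit]
  | succ i ih =>
    rw [← Fin.coeSucc_eq_succ, ← hx, ← ih, frobeniusOrbit, frobeniusOrbit, ← pow_mul, ← pow_succ]
    simp

variable {K : Type*} [Field K] {p k : ℕ} [Fact p.Prime] [CharP K p]

theorem frobeniusOrbit_frobeniusTrinomial {a b : Fin 5 → K} (ha : ∀ i, a i ^ p ^ k = a (i + 1))
    (hb : ∀ i, b i ^ p ^ k = b (i + 1)) {z : K} (hz : z ^ (p ^ k) ^ 5 = z) :
    frobeniusOrbit (p ^ k) (frobeniusTrinomial p k (a 0) (b 0) z) =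
      fun i ↦ frobeniusOrbit (p ^ k) z (i + 2) + b i * frobeniusOrbit (p ^ k) z (i + 1) +
        a i * frobeniusOrbit (p ^ k) z i := by
  refine Eq.trans (congrArg _ ?_) (frobeniusOrbit_apply_zero fun i ↦ ?_)
  · simp [frobeniusTrinomial, frobeniusOrbit]
  · simp only [add_pow_char_pow, mul_pow, frobeniusOrbit_pow hz, ha, hb, add_right_comm]

theorem exists_frobeniusTrinomial_eq_zero [Finite K] (hpow : ∀ z : K, z ^ (p ^ k) ^ 5 = z)
    {e a b : Fin 5 → K} (he : IsConjugateCycle (p ^ k) e)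
    (ha : ∀ i, a i ^ p ^ k = a (i + 1)) (hb : ∀ i, b i ^ p ^ k = b (i + 1))
    (hdet : (dicksonMatrix a b).det = 0) :
    ∃ z, z ≠ 0 ∧ frobeniusTrinomial p k (a 0) (b 0) z = 0 := by
  refine exists_ne_zero_map_eq_zero_of_det_eq_zero
    (χ := fun i : Fin 5 ↦ powMonoidHom ((p ^ k) ^ (i : ℕ))) (fun i j hij ↦ he.injective ?_)
    (fun i z ↦ ?_) hdet
  · rw [← frobeniusOrbit_apply_zero he.pow_eq]
    exact DFunLike.congr_fun hij (e 0)
  · refine (congrFun (frobeniusOrbit_frobeniusTrinomial ha hb (hpow z)) i).trans ?_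
    simp only [dicksonMatrix, Matrix.of_apply, add_mul, ite_mul, zero_mul, one_mul,
      Finset.sum_add_distrib, Finset.sum_ite_eq', Finset.mem_univ, if_true,
      frobeniusOrbit, powMonoidHom_apply]
    ring

end DicksonMatrix

section Criterion

theorem card_le_natDegree_mul_card_ker {K : Type*} [CommRing K] [IsDomain K]
    (f : K →+ K) {P : K[X]} (hP : P ≠ 0) (hPf : ∀ z, P.eval (f z) = 0) :
    Nat.card K ≤ P.natDegree * Nat.card f.ker := by
  have hsub : (f.range : Set K) ⊆ P.rootSet K := by
    rintro _ ⟨z, rfl⟩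
    simp [mem_rootSet, hP, hPf z]
  have hrange : Nat.card f.range ≤ P.natDegree :=
    (Nat.card_mono (rootSet_finite P K) hsub).trans (P.ncard_rootSet_le K)
  calc Nat.card K = Nat.card f.range * Nat.card f.ker := by
        rw [← AddSubgroup.card_mul_index f.ker, AddSubgroup.index_ker, mul_comm]
    _ ≤ P.natDegree * Nat.card f.ker := Nat.mul_le_mul_right _ hrange

theorem exists_div_notMem_of_card_lt {K : Type*} [Field K] [Finite K] {F : Subfield K}
    {S : AddSubgroup K} (hcard : Nat.card F < Nat.card S) :
    ∃ u ∈ S, ∃ v ∈ S, u ≠ 0 ∧ v ≠ 0 ∧ v / u ∉ F := by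
  have : Nontrivial S := Finite.one_lt_card_iff_nontrivial.1 (Finite.one_lt_card.trans hcard)
  obtain ⟨⟨u, hu⟩, hu0⟩ := exists_ne (0 : S)
  have hu0 : u ≠ 0 := fun h ↦ hu0 (Subtype.ext h)
  by_contra! hF
  have hdiv (v : S) : v / u ∈ F := by
    obtain hv | hv := eq_or_ne (v : K) 0
    · simp [hv]
    · exact hF u hu v v.2 hu0 hv
  refine hcard.not_ge (Nat.card_le_card_of_injective (fun v : S ↦ (⟨v / u, hdiv v⟩ : F))
    fun v w hvw ↦ Subtype.ext ((div_left_inj' hu0).1 ?_))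
  exact congrArg Subtype.val hvw

variable {K : Type*} [Field K] {p k : ℕ} [Fact p.Prime] [CharP K p]

theorem IsStarPentagon.card_le_card_ker {y : Fin 5 → K} (hy : IsStarPentagon y)
    (hpow : ∀ i, y i ^ p ^ k = y (i + 1)) (hK : Nat.card K = (p ^ k) ^ 5) (hk : k ≠ 0) :
    (p ^ k) ^ 2 ≤ Nat.card (frobeniusTrinomial p k 1 (y 0)).ker := by
  have hp := (Fact.out : p.Prime)
  have hq : 1 < p ^ k := Nat.one_lt_pow hk hp.one_lt
  have : Finite K := Nat.finite_of_card_ne_zero (by rw [hK]; positivity)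
  have hdeg (a : K) {i : ℕ} (hi : i < 3) :
      (C a * X ^ (p ^ k) ^ i).degree < (((p ^ k) ^ 3 : ℕ) : WithBot ℕ) :=
    (degree_C_mul_X_pow_le _ _).trans_lt (Nat.cast_lt.2 (Nat.pow_lt_pow_right hq hi))
  have hlow : (C (-y 3) * X ^ (p ^ k) ^ 2 + C (y 0) * X ^ (p ^ k) ^ 1 +
      C (-1) * X ^ (p ^ k) ^ 0).degree < (((p ^ k) ^ 3 : ℕ) : WithBot ℕ) :=
    (degree_add_le _ _).trans_lt (max_lt ((degree_add_le _ _).trans_lt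
      (max_lt (hdeg _ (by simp)) (hdeg _ (by simp)))) (hdeg _ (by simp)))
  have hcard := card_le_natDegree_mul_card_ker (frobeniusTrinomial p k 1 (y 0))
    (monic_X_pow_add hlow).ne_zero fun z ↦ ?_
  · rw [natDegree_add_eq_left_of_degree_lt (by rwa [degree_X_pow]), natDegree_X_pow, hK,
      pow_add _ 3 2] at hcard
    exact Nat.le_of_mul_le_mul_left hcard (by positivity)
  · have hf := congrFun (frobeniusOrbit_frobeniusTrinomial (a := 1) (fun _ ↦ one_pow _) hpow
      (pow_pow_eq_self_of_card_eq hK z))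
    have hf0 := hf 0
    have hf1 := hf 1
    have hf2 := hf 2
    have hf3 := hf 3
    have h01 := hy 0
    have h23 := hy 2
    simp only [frobeniusOrbit, Pi.one_apply, Fin.coe_ofNat_eq_mod, Nat.reduceMod, Nat.zero_mod,
      Nat.one_mod, Nat.mod_succ, pow_zero, pow_one, zero_add, one_mul, Fin.reduceAdd]
      at hf0 hf1 hf2 hf3 h01 h23
    simp only [eval_add, eval_mul, eval_pow, eval_X, eval_C, pow_zero, pow_one]
    linear_combination hf3 - y 3 * hf2 + y 0 * hf1 - hf0 + z ^ (p ^ k) ^ 2 * h01 -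
      z ^ (p ^ k) ^ 3 * h23

theorem Tmap_div_fst {q : ℕ} {α β y z w : K} (hz : z ≠ 0)
    (hαβ : z ^ q ^ 2 + β * y * z ^ q + α * z = 0) (hw : w ^ q ^ 2 + y * w ^ q + w = 0) :
    (Tmap q α β (w / z)).1 = -(y * z ^ q / z) * (Tmap q α β (w / z)).2 := by
  have hz1 : z ^ q ≠ 0 := pow_ne_zero _ hz
  have hz2 : z ^ q ^ 2 ≠ 0 := pow_ne_zero _ hz
  simp only [Tmap, div_pow]
  field_simp
  linear_combination z ^ q ^ 2 * hw - w ^ q ^ 2 * hαβ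

theorem not_linearIndependent_of_fst_eq_mul_snd {u v : K × K} {r : K} (hu : u.1 = r * u.2)
    (hv : v.1 = r * v.2) : ¬LinearIndependent K ![u, v] := by
  intro h
  have hcomb : v.2 • u + -u.2 • v = 0 := by
    ext
    · simp only [Prod.fst_add, Prod.smul_fst, smul_eq_mul, Prod.fst_zero, hu, hv]
      ring
    · simp only [Prod.snd_add, Prod.smul_snd, smul_eq_mul, Prod.snd_zero]
      ring
  have hu0 : u.2 = 0 := neg_eq_zero.1 (LinearIndependent.pair_iff.1 h _ _ hcomb).2
  exact h.ne_zero 0 (Prod.ext (by simp [hu, hu0]) hu0)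

theorem not_isMaxScattered_of_card_lt_card_ker [Finite K] {F : Subfield K} {α β y z : K}
    (hz : z ≠ 0) (hαβ : frobeniusTrinomial p k α (β * y) z = 0)
    (hcard : Nat.card F < Nat.card (frobeniusTrinomial p k 1 y).ker) :
    ¬IsMaxScattered (p ^ k) F α β := by
  rintro ⟨-, hscattered⟩
  obtain ⟨u, hu, v, hv, hu0, hv0, huv⟩ := exists_div_notMem_of_card_lt hcard
  have hker {w : K} (hw : w ∈ (frobeniusTrinomial p k 1 y).ker) :
      w ^ (p ^ k) ^ 2 + y * w ^ p ^ k + w = 0 := by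
    simpa [frobeniusTrinomial] using hw
  refine huv ?_
  rw [← div_div_div_cancel_right₀ hz v u]
  exact hscattered _ _ (div_ne_zero hu0 hz) (div_ne_zero hv0 hz)
    (not_linearIndependent_of_fst_eq_mul_snd (Tmap_div_fst hz hαβ (hker hu))
      (Tmap_div_fst hz hαβ (hker hv)))

theorem exists_isStarPentagon_det_dicksonMatrix_eq_zero (hK : Nat.card K = (p ^ k) ^ 5)
    {d b : Fin 5 → K} (hd : IsConjugateCycle (p ^ k) d) (hb : ∀ i, b i ^ p ^ k = b (i + 1))
    (hb0 : ∀ i, b i ≠ 0) :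
    ∃ y : Fin 5 → K, IsStarPentagon y ∧ (∀ i, y i ^ p ^ k = y (i + 1)) ∧
      (dicksonMatrix (fun i ↦ d i * b i * b (i + 4)) fun i ↦ b i * y i).det = 0 := by
  have hη : IsConjugateCycle (p ^ k) fun i ↦ 1 - d i :=
    .of_ne (fun i ↦ by simp only [sub_pow_char_pow, one_pow, hd.pow_eq])
      fun h ↦ hd.injective.ne zero_ne_one (sub_right_injective h)
  have hε : IsConjugateCycle (p ^ k) fun i ↦ (1 - d (i + 2)) * (1 - d (i + 4)) := by
    simpa only [add_assoc, Fin.reduceAdd] using hη.mul_add_two.shift 2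
  obtain ⟨y, hy, hpow, hsum⟩ := exists_isStarPentagon_sum_eq_zero hK hε
    (c := (1 + (∏ i, d i) * (∏ i, b i) ^ 2) / ∏ i, b i + (3 - ∑ i, d i)) (by
      have h3 : (3 : K) ^ p ^ k = 3 := by rw [← iterateFrobenius_def, map_ofNat]
      rw [add_pow_char_pow, div_pow, add_pow_char_pow, one_pow, mul_pow, pow_right_comm _ 2,
        sub_pow_char_pow, h3, prod_pow_eq_self hb, prod_pow_eq_self hd.pow_eq,
        sum_pow_char_pow_eq_self hd.pow_eq])
  refine ⟨y, hy, hpow, ?_⟩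
  have hprod : ∏ i, b i ≠ 0 := Finset.prod_ne_zero_iff.2 fun i _ ↦ hb0 i
  rw [hy.det_dicksonMatrix]
  field_simp at hsum
  linear_combination hsum

theorem isConjugateCycle_frobeniusOrbit [Finite K] {F : Subfield K} {q : ℕ} (hF : Nat.card F = q)
    {a : K} (hpow : a ^ q ^ 5 = a) (ha : a ∉ F) : IsConjugateCycle q (frobeniusOrbit q a) :=
  .of_ne (frobeniusOrbit_pow hpow) fun h ↦ ha (mem_of_pow_card_eq (by
    simpa only [hF, ← frobeniusOrbit_pow hpow, zero_add, frobeniusOrbit_zero] using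
      (h.trans (frobeniusOrbit_pow hpow 0).symm).symm))

theorem not_isMaxScattered_of_isConjugateCycle {F : Subfield K} (hF : Nat.card F = p ^ k)
    (hK : Nat.card K = (p ^ k) ^ 5) (hk : k ≠ 0) {d b : Fin 5 → K} (hd : IsConjugateCycle (p ^ k) d)
    (hb : ∀ i, b i ^ p ^ k = b (i + 1)) (hb0 : ∀ i, b i ≠ 0) :
    ¬IsMaxScattered (p ^ k) F (d 0 * b 0 * b 4) (b 0) := by
  have hp := (Fact.out : p.Prime)
  have : Finite K := Nat.finite_of_card_ne_zero (hK ▸ pow_ne_zero 5 (pow_ne_zero k hp.ne_zero))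
  obtain ⟨y, hy, hpow, hdet⟩ := exists_isStarPentagon_det_dicksonMatrix_eq_zero hK hd hb hb0
  obtain ⟨z, hz0, hz⟩ := exists_frobeniusTrinomial_eq_zero (pow_pow_eq_self_of_card_eq hK) hd
    (fun i ↦ by simp only [mul_pow, hd.pow_eq, hb, add_right_comm])
    (fun i ↦ by rw [mul_pow, hb, hpow]) hdet
  refine not_isMaxScattered_of_card_lt_card_ker hz0 hz ?_
  calc Nat.card F = p ^ k := hF
    _ < (p ^ k) ^ 2 := lt_self_pow₀ (Nat.one_lt_pow hk hp.one_lt) one_lt_two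
    _ ≤ Nat.card (frobeniusTrinomial p k 1 (y 0)).ker := hy.card_le_card_ker hpow hK hk

end Criterion

theorem stmt_6 (q : ℕ) (hq : ∃ p n : ℕ, Nat.Prime p ∧ 0 < n ∧ q = p ^ n)
    (K : Type*) [Field K] (F : Subfield K)
    (hFcard : Nat.card F = q) (hKcard : Nat.card K = q ^ 5)
    (α β : K) (hβ : β ≠ 0) (h : α ^ q / β ^ (q + 1) ∉ F) :
    ¬ IsMaxScattered q F α β := by
  obtain ⟨p, k, hp, hk, rfl⟩ := hq
  have : Fact p.Prime := ⟨hp⟩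
  have : Finite K := Nat.finite_of_card_ne_zero
    (hKcard ▸ pow_ne_zero 5 (pow_ne_zero k hp.ne_zero))
  have := Fintype.ofFinite K
  have : CharP K p := charP_of_card_eq_prime_pow (f := k * 5)
    (by rw [← Nat.card_eq_fintype_card, hKcard, pow_mul])
  let b := frobeniusOrbit (p ^ k) β
  have hb : ∀ i, b i ^ p ^ k = b (i + 1) :=
    frobeniusOrbit_pow (pow_pow_eq_self_of_card_eq hKcard β)
  have hb0 : ∀ i, b i ≠ 0 := fun i ↦ pow_ne_zero _ hβ
  have hb_zero : b 0 = β := frobeniusOrbit_zero _ _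
  have hratio : (α / (b 0 * b 4)) ^ p ^ k = α ^ p ^ k / β ^ (p ^ k + 1) := by
    rw [div_pow, mul_pow, hb_zero, (hb 4).trans hb_zero, pow_succ]
  have hd : IsConjugateCycle (p ^ k) (frobeniusOrbit (p ^ k) (α / (b 0 * b 4))) :=
    isConjugateCycle_frobeniusOrbit hFcard (pow_pow_eq_self_of_card_eq hKcard _)
      fun hmem ↦ h (hratio ▸ pow_mem hmem _)
  have hα : frobeniusOrbit (p ^ k) (α / (b 0 * b 4)) 0 * b 0 * b 4 = α := by
    rw [frobeniusOrbit_zero, mul_assoc, div_mul_cancel₀ _ (mul_ne_zero (hb0 0) (hb0 4))]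
  rw [← hα, ← hb_zero]
  exact not_isMaxScattered_of_isConjugateCycle hFcard hKcard hk.ne' hd hb hb0
end

section
/- Let α, β ∈ K with αβ ≠ 0 and α^q ≠ β^{q+1}. Then L_{α,β} is equivalent to the Sheekey linear set L_2^η for some η ∈ K if and only if α^{q^4} β^{q^2+q+1} − α^{q^4+q^2} β − α^{q^4+q} β^{q^2} + N(α) − β^q α^{q^3+1} + 1 = 0. -/
/-- `L_{α,β}` is equivalent to the linear set `L_s^η`: some field automorphism `τ` of `K`
together with an invertible `K`-linear map of `K²` carries the underlying `F`-subspace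
`{(x^τ − α^τ x^{q²τ}, x^{qτ} − β^τ x^{q²τ})}` onto `U_s^η = {(z, η z^{q^s} + z^{q^{5−s}})}`. -/
def IsEquivToL (q : ℕ) {K : Type*} [Field K] (α β η : K) (s : ℕ) : Prop :=
  ∃ τ : K ≃+* K, ∃ M : (K × K) ≃ₗ[K] K × K,
    (fun p => M p) '' {p : K × K | ∃ x : K,
        p = (τ x - τ α * (τ x) ^ q ^ 2, (τ x) ^ q - τ β * (τ x) ^ q ^ 2)} =
      {p : K × K | ∃ z : K, p = (z, η * z ^ q ^ s + z ^ q ^ (5 - s))}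

/-! Write `σ` for the `q`-Frobenius of `K` and `n = N(t)`. The two linear sets are equivalent
exactly when, for some `t ≠ 0`, `α = n / (t t^σ)` and `β = -(n + 1) / t^σ`: comparing the
coefficients of `1, σ, …, σ⁴` in the equivalence forces this with `t = a / b`, where `(a, b)` is
the first row of its matrix. Eliminating `t` gives `s := α^σ / (β β^σ) = n / (n + 1)²` and
`N(β) = -(n + 1)⁵ / n`. Conversely, the difference of the polynomial condition and its Frobenius
image is `N(β) (s^{σ³} - s^{σ⁴}) (1 - s^σ)`, so the condition forces `s` into the fixed field;
then it becomes a scalar equation relating `s` and `N(β)`, which is solved by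
`n = (1 - N(β) s²) s / (1 - s)`. -/

/-! ### Powers of a ring automorphism -/

theorem linearIndependent_ringAut_pow {R : Type*} [CommRing R] [IsDomain R] (σ : RingAut R) :
    LinearIndependent R fun i : Fin (orderOf σ) ↦ ⇑(σ ^ (i : ℕ)) := by
  refine (linearIndependent_monoidHom R R).comp
    (fun i : Fin (orderOf σ) ↦ ((σ ^ (i : ℕ) : RingAut R) : R →* R)) fun i j hij ↦ ?_
  refine Fin.ext (pow_injOn_Iio_orderOf i.isLt j.isLt (RingEquiv.ext fun x ↦ ?_))
  exact DFunLike.congr_fun hij x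

theorem coeffs_eq_zero_of_orderOf_eq_five {R : Type*} [CommRing R] [IsDomain R] {σ : RingAut R}
    (hσ : orderOf σ = 5) {c₀ c₁ c₂ c₃ c₄ : R}
    (h : ∀ x, c₀ * x + c₁ * σ x + c₂ * σ (σ x) + c₃ * σ (σ (σ x)) + c₄ * σ (σ (σ (σ x))) = 0) :
    c₀ = 0 ∧ c₁ = 0 ∧ c₂ = 0 ∧ c₃ = 0 ∧ c₄ = 0 := by
  have independent := linearIndependent_ringAut_pow σ
  rw [hσ] at independent
  have coeffs := Fintype.linearIndependent_iff.mp independent ![c₀, c₁, c₂, c₃, c₄] <| by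
    ext x
    simpa [Fin.sum_univ_five, RingAut.coe_pow] using h x
  exact ⟨coeffs 0, coeffs 1, coeffs 2, coeffs 3, coeffs 4⟩

theorem ringAut_apply_five {R : Type*} [Mul R] [Add R] {σ : RingAut R} (hσ : σ ^ 5 = 1) (x : R) :
    σ (σ (σ (σ (σ x)))) = x := by
  simpa only [RingAut.coe_pow] using! DFunLike.congr_fun hσ x

theorem exists_ringAut_eq_pow_card (F K : Type*) [Field F] [Field K] [Algebra F K] [Finite K] :
    ∃ σ : RingAut K, orderOf σ = Module.finrank F K ∧ ∀ x, σ x = x ^ Nat.card F := by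
  have := Finite.of_injective _ (algebraMap F K).injective
  have := Fintype.ofFinite F
  refine ⟨MulSemiringAction.toRingAut Gal(K/F) K (FiniteField.frobeniusAlgEquivOfAlgebraic F K),
    ?_, fun x ↦ ?_⟩
  · rw [← FiniteField.orderOf_frobeniusAlgEquivOfAlgebraic F K]
    refine orderOf_injective _ (fun f g hfg ↦ AlgEquiv.ext fun x ↦ ?_) _
    exact DFunLike.congr_fun hfg x
  · rw [Nat.card_eq_fintype_card]
    rfl

theorem finrank_eq_of_natCard_eq_pow {F V : Type*} [DivisionRing F] [Finite F] [AddCommGroup V]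
    [Module F V] [Finite V] {n : ℕ} (h : Nat.card V = Nat.card F ^ n) :
    Module.finrank F V = n :=
  Nat.pow_right_injective Finite.one_lt_card (Module.natCard_eq_pow_finrank.symm.trans h)

/-! ### The polynomial condition and its parametrization -/

section Field

variable {K : Type*} [Field K]

/-- The product of the first five conjugates of `x` under `σ`; it is the norm `N(x)` of `K` over
`F` when `σ` is the `q`-Frobenius. -/
def normFive (σ : RingAut K) (x : K) : K :=
  x * σ x * σ (σ x) * σ (σ (σ x)) * σ (σ (σ (σ x)))

/-- The polynomial expression in the conjugates of `α` and `β` whose vanishing characterizes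
Sheekey linear sets, written for an arbitrary automorphism `σ` in place of the `q`-Frobenius. -/
def sheekeyInvariant (σ : RingAut K) (α β : K) : K :=
  σ (σ (σ (σ α))) * (β * σ β * σ (σ β)) - σ (σ (σ (σ α))) * σ (σ α) * β
    - σ (σ (σ (σ α))) * σ α * σ (σ β) + normFive σ α - σ β * (σ (σ (σ α)) * α) + 1

/-- `t` parametrizes the pair `(α, β)`: writing `n = N(t)`, the two equations say
`α = n / (t t^σ)` and `β = -(n + 1) / t^σ`. -/
structure IsSheekeyParameter (σ : RingAut K) (α β t : K) : Prop where
  alpha_eq : α = σ (σ t) * σ (σ (σ t)) * σ (σ (σ (σ t)))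
  mul_apply_eq_neg_one : (t * α + β) * σ t = -1

variable {σ : RingAut K} {α β s t : K}

theorem normFive_ne_zero (ht : t ≠ 0) : normFive σ t ≠ 0 := by
  simp [normFive, ht]

theorem map_normFive (hσ : σ ^ 5 = 1) (t : K) : σ (normFive σ t) = normFive σ t := by
  simp only [normFive, map_mul, ringAut_apply_five hσ]
  ring

namespace IsSheekeyParameter

theorem ne_zero (h : IsSheekeyParameter σ α β t) : t ≠ 0 := by
  rintro rfl
  simpa using h.mul_apply_eq_neg_one

theorem map (h : IsSheekeyParameter σ α β t) {τ : RingAut K} (hτ : ∀ x, τ (σ x) = σ (τ x)) :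
    IsSheekeyParameter σ (τ α) (τ β) (τ t) where
  alpha_eq := by simpa only [map_mul, hτ] using congrArg τ h.alpha_eq
  mul_apply_eq_neg_one := by
    simpa only [map_mul, map_add, map_neg, map_one, hτ] using congrArg τ h.mul_apply_eq_neg_one

theorem beta_mul_eq (h : IsSheekeyParameter σ α β t) : β * σ t = -(normFive σ t + 1) := by
  have ht := h.mul_apply_eq_neg_one
  rw [h.alpha_eq] at ht
  rw [normFive]
  linear_combination ht

theorem sheekeyInvariant_eq_zero (hσ : σ ^ 5 = 1) (h : IsSheekeyParameter σ α β t) :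
    sheekeyInvariant σ α β = 0 := by
  have ht := h.ne_zero
  have ht₁ : σ t ≠ 0 := by simpa
  have ht₂ : σ (σ t) ≠ 0 := by simpa
  have ht₃ : σ (σ (σ t)) ≠ 0 := by simpa
  have hβ : β = -(normFive σ t + 1) / σ t := by rw [eq_div_iff ht₁, h.beta_mul_eq]
  rw [h.alpha_eq, hβ]
  simp only [sheekeyInvariant, normFive, map_div₀, map_neg, map_add, map_one, map_mul,
    ringAut_apply_five hσ]
  field_simp
  ring

end IsSheekeyParameter

theorem sheekeyInvariant_eq_of_map_eq_mul (hσ : σ ^ 5 = 1) (hs : σ α = s * (β * σ β)) :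
    sheekeyInvariant σ α β =
      normFive σ β * (σ (σ (σ s)) - σ s * σ (σ (σ s)) - s * σ (σ (σ s))
        - σ (σ s) * σ (σ (σ (σ s)))) + normFive σ β ^ 2 * normFive σ s + 1 := by
  have hα : α = σ (σ (σ (σ s))) * (σ (σ (σ (σ β))) * β) := by
    rw [← ringAut_apply_five hσ α, hs]
    simp only [map_mul, ringAut_apply_five hσ]
  rw [hα]
  simp only [sheekeyInvariant, normFive, map_mul, ringAut_apply_five hσ]
  ring

theorem sheekeyInvariant_sub_map (hσ : σ ^ 5 = 1) (hs : σ α = s * (β * σ β)) :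
    sheekeyInvariant σ α β - σ (sheekeyInvariant σ α β) =
      normFive σ β * ((σ (σ (σ s)) - σ (σ (σ (σ s)))) * (1 - σ s)) := by
  rw [sheekeyInvariant_eq_of_map_eq_mul hσ hs]
  simp only [map_add, map_sub, map_mul, map_pow, map_one, map_normFive hσ, ringAut_apply_five hσ]
  ring

theorem map_ratio_eq_self (hσ : σ ^ 5 = 1) (hs : σ α = s * (β * σ β)) (hβ : β ≠ 0)
    (hs₁ : s ≠ 1) (h : sheekeyInvariant σ α β = 0) : σ s = s := by
  have factorization := sheekeyInvariant_sub_map hσ hs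
  rw [h, map_zero, sub_zero, eq_comm] at factorization
  have hσs₁ : 1 - σ s ≠ 0 := sub_ne_zero.mpr (Ne.symm (by simpa using hs₁))
  have product := (mul_eq_zero.mp factorization).resolve_left (normFive_ne_zero hβ)
  have hσ₃s := sub_eq_zero.mp ((mul_eq_zero.mp product).resolve_right hσs₁)
  exact (σ.injective (σ.injective (σ.injective hσ₃s))).symm

theorem mul_add_one_sq_eq {B n : K} (hs₁ : s ≠ 1)
    (hsB : B * (s - 3 * s ^ 2) + B ^ 2 * s ^ 5 + 1 = 0)
    (hn : n * (1 - s) = (1 - B * s ^ 2) * s) :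
    s * (n + 1) ^ 2 = n := by
  have scaled : (1 - s) ^ 2 * (s * (n + 1) ^ 2 - n) = 0 := by
    linear_combination
      (s * (n * (1 - s) + (1 - B * s ^ 2) * s) + (2 * s - 1) * (1 - s)) * hn + s * s * hsB
  have hs : (1 - s) ^ 2 ≠ 0 := pow_ne_zero 2 (sub_ne_zero.mpr hs₁.symm)
  exact sub_eq_zero.mp ((mul_eq_zero.mp scaled).resolve_left hs)

theorem mul_eq_neg_add_one_pow_five {B n : K} (hs₁ : s ≠ 1)
    (hsB : B * (s - 3 * s ^ 2) + B ^ 2 * s ^ 5 + 1 = 0)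
    (hn : n * (1 - s) = (1 - B * s ^ 2) * s) :
    B * n = -(n + 1) ^ 5 := by
  have hsn := mul_add_one_sq_eq hs₁ hsB hn
  have hs₀ : s ≠ 0 := by
    rintro rfl
    simp at hsB
  have scaled : s ^ 3 * (B * n + (n + 1) ^ 5) = 0 := by
    linear_combination n * hn + (s ^ 2 * (n + 1) ^ 3 + s * n * (n + 1) + n) * hsn
  have := (mul_eq_zero.mp scaled).resolve_left (pow_ne_zero 3 hs₀)
  linear_combination this

/-- The witness comes from solving `β^{σ⁴} t = -(n + 1)` for `t`. -/
theorem isSheekeyParameter_neg_div {n : K} (hσ : σ ^ 5 = 1) (hβ : β ≠ 0)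
    (hs : σ α = s * (β * σ β)) (hσs : σ s = s) (hσn : σ n = n)
    (hsn : s * (n + 1) ^ 2 = n) (hβn : normFive σ β * n = -(n + 1) ^ 5) :
    IsSheekeyParameter σ α β (-(n + 1) / σ (σ (σ (σ β)))) := by
  have hβ₁ : σ β ≠ 0 := by simpa
  have hβ₂ : σ (σ β) ≠ 0 := by simpa
  have hβ₃ : σ (σ (σ β)) ≠ 0 := by simpa
  have hβ₄ : σ (σ (σ (σ β))) ≠ 0 := by simpa
  have hα : α = s * (σ (σ (σ (σ β))) * β) := by
    rw [← ringAut_apply_five hσ α, hs]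
    simp only [map_mul, ringAut_apply_five hσ, hσs]
  have hn : n ≠ 0 := by
    rintro rfl
    simp at hβn
  have hsβ : s * normFive σ β = -(n + 1) ^ 3 :=
    mul_left_cancel₀ hn (by linear_combination s * hβn - (n + 1) ^ 3 * hsn)
  constructor <;> rw [hα] <;>
    simp only [map_div₀, map_neg, map_add, map_one, hσn, ringAut_apply_five hσ] <;> field_simp
  · rw [normFive] at hsβ
    linear_combination hsβ
  · linear_combination hsn

theorem exists_isSheekeyParameter_iff (hσ : σ ^ 5 = 1) (hβ : β ≠ 0) (hne : σ α ≠ β * σ β) :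
    (∃ t, IsSheekeyParameter σ α β t) ↔ sheekeyInvariant σ α β = 0 := by
  refine ⟨fun ⟨t, ht⟩ ↦ ht.sheekeyInvariant_eq_zero hσ, fun h ↦ ?_⟩
  have hσβ : β * σ β ≠ 0 := mul_ne_zero hβ (by simpa)
  obtain ⟨s, hs⟩ : ∃ s, σ α = s * (β * σ β) := ⟨_, (div_mul_cancel₀ _ hσβ).symm⟩
  have hs₁ : s ≠ 1 := fun h ↦ hne (by rw [hs, h, one_mul])
  have hσs := map_ratio_eq_self hσ hs hβ hs₁ h
  set B := normFive σ β with hB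
  have hsB : B * (s - 3 * s ^ 2) + B ^ 2 * s ^ 5 + 1 = 0 := by
    rw [sheekeyInvariant_eq_of_map_eq_mul hσ hs, normFive.eq_def σ s] at h
    simp only [hσs] at h
    linear_combination h
  obtain ⟨n, hn⟩ : ∃ n, n = (1 - B * s ^ 2) * s / (1 - s) := ⟨_, rfl⟩
  have hn' : n * (1 - s) = (1 - B * s ^ 2) * s := by
    rw [hn, div_mul_cancel₀ _ (sub_ne_zero.mpr hs₁.symm)]
  have hσn : σ n = n := by
    rw [hn]
    simp only [map_div₀, map_mul, map_sub, map_one, map_pow, hσs, hB, map_normFive hσ]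
  exact ⟨_, isSheekeyParameter_neg_div hσ hβ hs hσs hσn (mul_add_one_sq_eq hs₁ hsB hn')
    (mul_eq_neg_add_one_pow_five hs₁ hsB hn')⟩

/-! ### Equivalence of linear sets -/

/-- The map `T_{α,β}` for an automorphism `σ` in place of the `q`-Frobenius; its range is the
subspace underlying `L_{α,β}`. -/
def linearSetMap (σ : RingAut K) (α β : K) : K →+ K × K where
  toFun x := (x - α * σ (σ x), σ x - β * σ (σ x))
  map_zero' := by simp
  map_add' x y := by
    simp only [map_add, Prod.mk_add_mk]
    congr 1 <;> ring

/-- The map `z ↦ (z, η z^{σ²} + z^{σ³})` whose range is the subspace `U_2^η` underlying the Sheekey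
linear set. -/
def sheekeyMap (σ : RingAut K) (η z : K) : K × K :=
  (z, η * σ (σ z) + σ (σ (σ z)))

theorem linearSetMap_apply (x : K) :
    linearSetMap σ α β x = (x - α * σ (σ x), σ x - β * σ (σ x)) := rfl

theorem linearSetMap_injective (hne : σ α ≠ β * σ β) :
    Function.Injective (linearSetMap σ α β) := by
  refine (injective_iff_map_eq_zero _).mpr fun x hx ↦ ?_
  obtain ⟨hx₁, hx₂⟩ := Prod.mk_eq_zero.mp hx
  have hσx₁ := congrArg σ hx₁
  have hσx₂ := congrArg σ hx₂
  simp only [map_sub, map_mul, map_zero] at hσx₁ hσx₂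
  have product : (σ α - β * σ β) * σ (σ (σ x)) = 0 := by
    linear_combination hx₂ - hσx₁ + β * hσx₂
  simpa using (mul_eq_zero.mp product).resolve_left (sub_ne_zero.mpr hne)

theorem isSheekeyParameter_div {a b e η : K} (hb : b ≠ 0)
    (he : e = a * α + b * β) (h₂ : α * σ (σ (σ e)) = η * σ (σ a))
    (h₃ : σ (σ (σ a)) = -(η * σ (σ b))) (h₄ : σ (σ (σ b)) = η * σ (σ e)) :
    IsSheekeyParameter σ α β (a / b) := by
  have hη : η ≠ 0 := by
    rintro rfl
    exact hb (by simpa using h₄)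
  have hb₁ : σ b ≠ 0 := by simpa
  have hb₂ : σ (σ b) ≠ 0 := by simpa
  have hb₃ : σ (σ (σ b)) ≠ 0 := by simpa
  have hb₄ : σ (σ (σ (σ b))) ≠ 0 := by simpa
  have hea : e * σ a = -(b * σ b) := by
    refine σ.injective (σ.injective (mul_left_cancel₀ hη ?_))
    simp only [map_mul, map_neg]
    linear_combination (-σ (σ (σ a))) * h₄ + σ (σ (σ b)) * h₃
  have hea₃ : σ (σ (σ e)) * σ (σ (σ (σ a))) = -(σ (σ (σ b)) * σ (σ (σ (σ b)))) := by
    simpa only [map_mul, map_neg] using congrArg (fun x ↦ σ (σ (σ x))) hea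
  constructor <;> simp only [map_div₀] <;> field_simp
  · linear_combination α * σ (σ b) * hea₃ - σ (σ (σ (σ a))) * σ (σ b) * h₂
      - σ (σ a) * σ (σ (σ (σ a))) * h₃
  · linear_combination hea - σ a * he

theorem linearMap_prod_apply {R M : Type*} [Semiring R] [AddCommMonoid M] [Module R M]
    (f : R × R →ₗ[R] M) (u v : R) : f (u, v) = u • f (1, 0) + v • f (0, 1) := by
  rw [← map_smul, ← map_smul, ← map_add]
  simp

theorem exists_isSheekeyParameter_of_mem_range {η : K} (hσ : orderOf σ = 5)
    {M : K × K →ₗ[K] K × K} (hM : Function.Injective M)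
    (hrange : ∀ x, M (linearSetMap σ α β x) ∈ Set.range (sheekeyMap σ η)) :
    ∃ t, IsSheekeyParameter σ α β t := by
  have hσ₅ : σ ^ 5 = 1 := hσ ▸ pow_orderOf_eq_one σ
  obtain ⟨a, c, hac⟩ : ∃ a c, M (1, 0) = (a, c) := ⟨_, _, rfl⟩
  obtain ⟨b, d, hbd⟩ : ∃ b d, M (0, 1) = (b, d) := ⟨_, _, rfl⟩
  set e := a * α + b * β with he
  have pointwise (x : K) : c * (x - α * σ (σ x)) + d * (σ x - β * σ (σ x)) =
      η * σ (σ (a * x + b * σ x - e * σ (σ x))) + σ (σ (σ (a * x + b * σ x - e * σ (σ x)))) := by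
    obtain ⟨z, hz⟩ := hrange x
    rw [linearSetMap_apply, linearMap_prod_apply, hac, hbd] at hz
    obtain ⟨hz₁, hz₂⟩ := Prod.mk.inj hz
    have : z = a * x + b * σ x - e * σ (σ x) := by
      simp only [hz₁, Prod.smul_mk, smul_eq_mul, he]
      ring
    rw [← this, hz₂]
    simp only [Prod.smul_mk, smul_eq_mul]
    ring
  obtain ⟨h₀, hd, h₂, h₃, h₄⟩ := coeffs_eq_zero_of_orderOf_eq_five hσ
    (c₀ := c + σ (σ (σ e))) (c₁ := d) (c₂ := -(c * α) - d * β - η * σ (σ a))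
    (c₃ := -(η * σ (σ b)) - σ (σ (σ a))) (c₄ := η * σ (σ e) - σ (σ (σ b))) fun x ↦ by
      have := pointwise x
      simp only [map_add, map_sub, map_mul, ringAut_apply_five hσ₅] at this
      linear_combination this
  have hb : b ≠ 0 := by
    rintro rfl
    have := hM (a₁ := (0, 1)) (a₂ := 0) (by rw [hbd, hd, map_zero, Prod.mk_zero_zero])
    simp at this
  exact ⟨a / b, isSheekeyParameter_div (η := η) hb he
    (by linear_combination h₂ + α * h₀ + β * hd)
    (by linear_combination -h₃) (by linear_combination -h₄)⟩

/-- The equivalence `(u, v) ↦ (t u + v, u / r)` carrying the linear set with parameter `t` to a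
Sheekey linear set when `r = t^{σ⁴}`. -/
def sheekeyEquiv (t : K) {r : K} (hr : r ≠ 0) : (K × K) ≃ₗ[K] K × K where
  toFun p := (t * p.1 + p.2, p.1 / r)
  invFun p := (r * p.2, p.1 - t * (r * p.2))
  map_add' p p' := by
    simp only [Prod.fst_add, Prod.snd_add, Prod.mk_add_mk]
    congr 1 <;> ring
  map_smul' k p := by
    simp only [Prod.smul_fst, Prod.smul_snd, Prod.smul_mk, smul_eq_mul, RingHom.id_apply]
    congr 1 <;> ring
  left_inv p := by ext <;> simp [mul_div_cancel₀ _ hr]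
  right_inv p := by ext <;> simp [hr]

theorem sheekeyEquiv_apply {r : K} (hr : r ≠ 0) (u v : K) :
    sheekeyEquiv t hr (u, v) = (t * u + v, u / r) := rfl

theorem IsSheekeyParameter.sheekeyEquiv_linearSetMap (hσ : σ ^ 5 = 1)
    (h : IsSheekeyParameter σ α β t) (hr : σ (σ (σ (σ t))) ≠ 0) (x : K) :
    sheekeyEquiv t hr (linearSetMap σ α β x) =
      sheekeyMap σ (-σ (σ (σ t))) (t * x + σ x + σ (σ x) / σ t) := by
  have ht₁ : σ t ≠ 0 := by simpa using h.ne_zero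
  have ht₃ : σ (σ (σ t)) ≠ 0 := by simpa using h.ne_zero
  rw [linearSetMap_apply, sheekeyEquiv_apply, sheekeyMap]
  ext
  · field_simp
    linear_combination -σ (σ x) * h.mul_apply_eq_neg_one
  · simp only [map_add, map_mul, map_div₀, ringAut_apply_five hσ]
    rw [h.alpha_eq]
    field_simp
    ring

theorem IsSheekeyParameter.exists_image_range_eq [Finite K] (hσ : σ ^ 5 = 1)
    (hne : σ α ≠ β * σ β) (h : IsSheekeyParameter σ α β t) :
    ∃ (η : K) (M : (K × K) ≃ₗ[K] K × K),
      M '' Set.range (linearSetMap σ α β) = Set.range (sheekeyMap σ η) := by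
  have ht₄ : σ (σ (σ (σ t))) ≠ 0 := by simpa using h.ne_zero
  refine ⟨-σ (σ (σ t)), sheekeyEquiv t ht₄, ?_⟩
  set f : K → K := fun x ↦ t * x + σ x + σ (σ x) / σ t
  have conjugation : sheekeyEquiv t ht₄ ∘ linearSetMap σ α β = sheekeyMap σ (-σ (σ (σ t))) ∘ f :=
    funext (h.sheekeyEquiv_linearSetMap hσ ht₄)
  have f_injective : Function.Injective f := .of_comp (f := sheekeyMap σ (-σ (σ (σ t)))) <| by
    rw [← conjugation]
    exact (sheekeyEquiv t ht₄).injective.comp (linearSetMap_injective hne)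
  rw [← Set.range_comp, conjugation,
    (Finite.surjective_of_injective f_injective).range_comp]

theorem isEquivToL_two_iff {q : ℕ} (hσ : ∀ x, σ x = x ^ q) (η : K) :
    IsEquivToL q α β η 2 ↔ ∃ (τ : RingAut K) (M : (K × K) ≃ₗ[K] K × K),
      M '' Set.range (linearSetMap σ (τ α) (τ β)) = Set.range (sheekeyMap σ η) := by
  have hσ₂ (x : K) : x ^ q ^ 2 = σ (σ x) := by simp only [hσ]; ring
  have hσ₃ (x : K) : x ^ q ^ (5 - 2) = σ (σ (σ x)) := by simp only [hσ, Nat.reduceSub]; ring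
  refine exists_congr fun τ ↦ exists_congr fun M ↦ Eq.congr (congrArg _ ?_) ?_ <;> ext p
  · rw [Set.mem_range, τ.surjective.exists]
    simp only [Set.mem_ofPred_eq, linearSetMap_apply, hσ₂, ← hσ, eq_comm]
  · simp only [Set.mem_ofPred_eq, Set.mem_range, sheekeyMap, hσ₂, hσ₃, eq_comm]

theorem exists_isEquivToL_two_iff [Finite K] {q : ℕ} (hσ : orderOf σ = 5) (hσq : ∀ x, σ x = x ^ q)
    (hne : σ α ≠ β * σ β) :
    (∃ η, IsEquivToL q α β η 2) ↔ ∃ t, IsSheekeyParameter σ α β t := by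
  simp only [isEquivToL_two_iff hσq]
  constructor
  · rintro ⟨η, τ, M, hM⟩
    obtain ⟨t, ht⟩ := exists_isSheekeyParameter_of_mem_range hσ (M := M.toLinearMap) M.injective
      fun x ↦ hM ▸ Set.mem_image_of_mem M (Set.mem_range_self x)
    have := ht.map (τ := τ.symm) fun x ↦ by rw [hσq, hσq, map_pow]
    rw [τ.symm_apply_apply, τ.symm_apply_apply] at this
    exact ⟨_, this⟩
  · rintro ⟨t, ht⟩
    obtain ⟨η, M, hM⟩ := ht.exists_image_range_eq (hσ ▸ pow_orderOf_eq_one σ) hne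
    exact ⟨η, 1, M, hM⟩

theorem sheekeyInvariant_eq_of_apply_eq_pow {q : ℕ} (hσ : ∀ x, σ x = x ^ q) :
    sheekeyInvariant σ α β =
      α ^ q ^ 4 * β ^ (q ^ 2 + q + 1) - α ^ (q ^ 4 + q ^ 2) * β
        - α ^ (q ^ 4 + q) * β ^ q ^ 2 + α ^ (1 + q + q ^ 2 + q ^ 3 + q ^ 4)
        - β ^ q * α ^ (q ^ 3 + 1) + 1 := by
  simp only [sheekeyInvariant, normFive, hσ]
  ring

end Field

theorem stmt_8 (q : ℕ) (hq : ∃ p n : ℕ, Nat.Prime p ∧ 0 < n ∧ q = p ^ n)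
    (K : Type*) [Field K] (F : Subfield K)
    (hFcard : Nat.card F = q) (hKcard : Nat.card K = q ^ 5)
    (α β : K) (hαβ : α * β ≠ 0) (hne : α ^ q ≠ β ^ (q + 1)) :
    (∃ η : K, IsEquivToL q α β η 2) ↔
      α ^ q ^ 4 * β ^ (q ^ 2 + q + 1) - α ^ (q ^ 4 + q ^ 2) * β
        - α ^ (q ^ 4 + q) * β ^ q ^ 2 + α ^ (1 + q + q ^ 2 + q ^ 3 + q ^ 4)
        - β ^ q * α ^ (q ^ 3 + 1) + 1 = 0 := by
  have : Finite K := by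
    obtain ⟨p, n, hp, -, rfl⟩ := hq
    exact Nat.finite_of_card_ne_zero (by simp [hKcard, hp.ne_zero])
  obtain ⟨σ, hσ, hσq⟩ := exists_ringAut_eq_pow_card F K
  rw [finrank_eq_of_natCard_eq_pow (hFcard.symm ▸ hKcard)] at hσ
  rw [hFcard] at hσq
  have hne' : σ α ≠ β * σ β := by rwa [hσq, hσq, ← pow_succ']
  rw [exists_isEquivToL_two_iff hσ hσq hne',
    exists_isSheekeyParameter_iff (hσ ▸ pow_orderOf_eq_one σ) (right_ne_zero_of_mul hαβ) hne',
    sheekeyInvariant_eq_of_apply_eq_pow hσq]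
end
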